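/- arXiv:2310.17520 — 3 statements merged into one kernel-verified Lean document; each statement's English description precedes it below -/
import Mathlib

section
/- Let G=(V,E) be a finite connected graph with n vertices, normalized adjacency eigenvalues μ_n ≤ … ≤ μ_2 ≤ μ_1 = 1, and edge-expansion h. Then 1 + μ_{n-1} ≥ ((1-μ_2)^2 / (2h^2)) · (√(1 + h^2/(1-μ_2)) − 1)^2. -/
open Finset Polynomial

noncomputable section
open scoped Classical

/-- The normalized adjacency matrix `D⁻¹A` of a finite graph. -/
def normAdj {V : Type*} [Fintype V] (G : SimpleGraph V) : Matrix V V ℝ :=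
  Matrix.of fun u v => if G.Adj u v then ((G.degree u : ℝ))⁻¹ else 0

/-- The volume of a vertex subset: the sum of the degrees of its vertices. -/
def vol {V : Type*} [Fintype V] (G : SimpleGraph V) (S : Finset V) : ℝ :=
  ∑ u ∈ S, (G.degree u : ℝ)

/-- The number of boundary edges of a vertex subset, i.e. edges with exactly one
endpoint in `S`. -/
def bdry {V : Type*} [Fintype V] (G : SimpleGraph V) (S : Finset V) : ℝ :=
  ∑ u ∈ S, ∑ v ∈ Sᶜ, if G.Adj u v then (1 : ℝ) else 0

/-- The edge-expansion (Cheeger constant)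
`h = min_{∅ ≠ S ⊊ V} |∂S| / min(vol S, vol Sᶜ)`. -/
def cheeger {V : Type*} [Fintype V] (G : SimpleGraph V) : ℝ :=
  sInf { x : ℝ | ∃ S : Finset V, S.Nonempty ∧ S ≠ Finset.univ ∧
    x = bdry G S / min (vol G S) (vol G Sᶜ) }

/-!
Let `f` and `g` be orthonormal eigenvectors for the two smallest eigenvalues, put
`ε = 1 + μ_{n-1}` and `a = 1 - μ₂`, and compute norms and means with the degrees as weights. Passing
to absolute values turns the signless energy of `f`, which is at most `ε`, into a bound on the
Dirichlet energy of `|f|`, so by the Poincaré inequality `|f|` has variance at most `ε / a`, and so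
has `|g|`. Both are therefore close to the same constant, and `⟨|f|, |g|⟩ ≥ 1 - 2 ε / a`.

On the other hand `f g` has mean zero, so by the coarea formula its total variation is at least
`h ⟨|f|, |g|⟩`. Since `f(u) g(u) - f(v) g(v)` is half of
`(f(u) + f(v)) (g(u) - g(v)) + (g(u) + g(v)) (f(u) - f(v))`, that total variation is at most
`2 √(2 ε)` by Cauchy-Schwarz. Solving `h (1 - 2 ε / a) ≤ 2 √(2 ε)` for `ε` gives the bound.
-/

section Cuts

open MeasureTheory

variable {V : Type*} [Fintype V]

/-- The total weight `K(S, Sᶜ)` that a kernel `K` puts on pairs leaving `S`; for an adjacency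
matrix it is `|∂S|`. -/
def cutWeight (K : V → V → ℝ) (S : Finset V) : ℝ :=
  ∑ u ∈ S, ∑ v ∈ Sᶜ, K u v

theorem cutWeight_sublevel (K : V → V → ℝ) (φ : V → ℝ) (t : ℝ) :
    cutWeight K {u | φ u ≤ t} =
      ∑ u, ∑ v, K u v * (Set.Ico (φ u) (φ v)).indicator (1 : ℝ → ℝ) t := by
  simp [cutWeight, sum_filter, compl_filter, Set.indicator_apply, ite_and]

theorem integrable_indicator_Ico_one (a b : ℝ) :
    Integrable ((Set.Ico a b).indicator (1 : ℝ → ℝ)) :=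
  (integrable_indicator_iff measurableSet_Ico).2 (integrableOn_const (by simp))

theorem integrable_cutWeight_sublevel (K : V → V → ℝ) (φ : V → ℝ) :
    Integrable fun t => cutWeight K {u | φ u ≤ t} := by
  simp only [cutWeight_sublevel]
  exact integrable_finsetSum _ fun u _ => integrable_finsetSum _ fun v _ =>
    (integrable_indicator_Ico_one _ _).const_mul _

theorem integral_cutWeight_sublevel (K : V → V → ℝ) (φ : V → ℝ) :
    ∫ t, cutWeight K {u | φ u ≤ t} = ∑ u, ∑ v, K u v * (φ v - φ u)⁺ := by
  have hint (u v : V) : Integrable fun t =>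
      K u v * (Set.Ico (φ u) (φ v)).indicator (1 : ℝ → ℝ) t :=
    (integrable_indicator_Ico_one _ _).const_mul _
  simp_rw [cutWeight_sublevel]
  rw [integral_finsetSum _ fun u _ => integrable_finsetSum _ fun v _ => hint u v]
  simp_rw [integral_finsetSum _ fun v _ => hint _ v, integral_const_mul,
    integral_indicator_one measurableSet_Ico, Real.volume_real_Ico, posPart_def]

theorem sum_mul_abs_sub_le_of_cutWeight_le {K L : V → V → ℝ}
    (hcut : ∀ S, cutWeight K S ≤ cutWeight L S) (φ : V → ℝ) :
    ∑ u, ∑ v, K u v * |φ u - φ v| ≤ ∑ u, ∑ v, L u v * |φ u - φ v| := by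
  have hpos (ψ : V → ℝ) :
      ∑ u, ∑ v, K u v * (ψ v - ψ u)⁺ ≤ ∑ u, ∑ v, L u v * (ψ v - ψ u)⁺ := by
    simp_rw [← integral_cutWeight_sublevel]
    exact integral_mono (integrable_cutWeight_sublevel K ψ) (integrable_cutWeight_sublevel L ψ)
      fun _ => hcut _
  have habs (u v : V) : |φ u - φ v| = (φ v - φ u)⁺ + ((-φ) v - (-φ) u)⁺ := by
    rw [← posPart_add_negPart, ← posPart_neg, add_comm, neg_sub, Pi.neg_apply, Pi.neg_apply,
      neg_sub_neg]
  simp_rw [habs, mul_add, sum_add_distrib]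
  exact add_le_add (hpos φ) (hpos (-φ))

theorem mul_vol_mul_vol_le_of_expansion {K : V → V → ℝ} {d : V → ℝ} (hd : ∀ u, 0 ≤ d u) {h : ℝ}
    (hh : 0 ≤ h) {S : Finset V}
    (hS : h * min (∑ u ∈ S, d u) (∑ u ∈ Sᶜ, d u) ≤ cutWeight K S) :
    h * ((∑ u ∈ S, d u) * ∑ u ∈ Sᶜ, d u) ≤ (∑ u, d u) * cutWeight K S := by
  have hvol (T : Finset V) : 0 ≤ ∑ u ∈ T, d u := sum_nonneg fun u _ => hd u
  have htotal := sum_add_sum_compl S d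
  rw [← min_mul_max (∑ u ∈ S, d u), ← mul_assoc, mul_comm (∑ u, d u)]
  refine mul_le_mul hS (max_le ?_ ?_) (le_max_of_le_left (hvol S))
    ((mul_nonneg hh (le_min (hvol S) (hvol Sᶜ))).trans hS) <;>
  linarith [hvol S, hvol Sᶜ]

theorem sum_mul_abs_le_of_sum_mul_eq_zero {d φ : V → ℝ} (hd : ∀ u, 0 ≤ d u)
    (hφ : ∑ u, d u * φ u = 0) :
    (∑ u, d u) * ∑ u, d u * |φ u| ≤ ∑ u, ∑ v, d u * d v * |φ u - φ v| := by
  rw [mul_sum]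
  refine sum_le_sum fun u _ => ?_
  simp_rw [mul_left_comm _ (d u), mul_assoc (d u), ← mul_sum]
  refine mul_le_mul_of_nonneg_left ?_ (hd u)
  calc (∑ v, d v) * |φ u| = |∑ v, d v * (φ u - φ v)| := by
        simp_rw [mul_sub, sum_sub_distrib, hφ, ← sum_mul, sub_zero, abs_mul,
          abs_of_nonneg (sum_nonneg fun v _ => hd v)]
    _ ≤ ∑ v, |d v * (φ u - φ v)| := abs_sum_le_sum_abs _ _
    _ = ∑ v, d v * |φ u - φ v| := by simp_rw [abs_mul, abs_of_nonneg (hd _)]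

theorem expansion_mul_sum_abs_le {K : V → V → ℝ} {d : V → ℝ} (hd : ∀ u, 0 ≤ d u)
    (hvol : 0 < ∑ u, d u) {h : ℝ} (hh : 0 ≤ h)
    (hcut : ∀ S, h * min (∑ u ∈ S, d u) (∑ u ∈ Sᶜ, d u) ≤ cutWeight K S)
    {φ : V → ℝ} (hφ : ∑ u, d u * φ u = 0) :
    h * ∑ u, d u * |φ u| ≤ ∑ u, ∑ v, K u v * |φ u - φ v| := by
  -- Compare `K` with the product kernel `d ⊗ d`, whose `L¹` inequality is elementary.
  have hcompare := sum_mul_abs_sub_le_of_cutWeight_le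
    (K := fun u v => h * (d u * d v)) (L := fun u v => (∑ w, d w) * K u v) (fun S => by
      simpa only [cutWeight, ← mul_sum, ← sum_mul] using
        mul_vol_mul_vol_le_of_expansion hd hh (hcut S)) φ
  simp_rw [mul_assoc, ← mul_sum] at hcompare
  refine le_of_mul_le_mul_left (le_trans ?_ hcompare) hvol
  rw [mul_left_comm]
  simpa only [mul_assoc, ← mul_sum] using
    mul_le_mul_of_nonneg_left (sum_mul_abs_le_of_sum_mul_eq_zero hd hφ) hh

end Cuts

section WeightedInner

open RCLike

variable {ι : Type*} [Fintype ι] {w : ι → ℝ}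

theorem wInner_eq_sum_mul (w f g : ι → ℝ) : ⟪f, g⟫_[ℝ, w] = ∑ i, w i * (f i * g i) := by
  simp [wInner, mul_comm]

theorem wInner_symm (w f g : ι → ℝ) : ⟪f, g⟫_[ℝ, w] = ⟪g, f⟫_[ℝ, w] := by
  simp_rw [wInner_eq_sum_mul, mul_comm]

theorem wInner_abs_self (w f : ι → ℝ) : ⟪|f|, |f|⟫_[ℝ, w] = ⟪f, f⟫_[ℝ, w] := by
  simp [wInner_eq_sum_mul]

theorem sq_wInner_le (hw : 0 ≤ w) (f g : ι → ℝ) :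
    ⟪f, g⟫_[ℝ, w] ^ 2 ≤ ⟪f, f⟫_[ℝ, w] * ⟪g, g⟫_[ℝ, w] := by
  simp_rw [wInner_eq_sum_mul]
  exact sum_sq_le_sum_mul_sum_of_sq_le_mul _ (fun i _ => mul_nonneg (hw i) (mul_self_nonneg _))
    (fun i _ => mul_nonneg (hw i) (mul_self_nonneg _)) fun i _ => le_of_eq (by ring)

theorem wInner_eq_inner_sqrt_mul (hw : 0 ≤ w) (f g : ι → ℝ) :
    ⟪f, g⟫_[ℝ, w] =
      inner ℝ (WithLp.toLp 2 fun i => √(w i) * f i) (WithLp.toLp 2 fun i => √(w i) * g i) := by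
  rw [← wInner_one_eq_inner, wInner_eq_sum_mul, wInner_eq_sum_mul]
  simp only [Pi.one_apply, one_mul]
  refine sum_congr rfl fun i _ => ?_
  linear_combination (-(f i * g i)) * Real.mul_self_sqrt (hw i)

theorem mul_wInner_ge_of_variance_le (hw : 0 ≤ w) (hw' : 0 < ∑ i, w i) {p q : ι → ℝ}
    (hp : 0 ≤ p) (hq : 0 ≤ q) (hpp : ⟪p, p⟫_[ℝ, w] = 1) (hqq : ⟪q, q⟫_[ℝ, w] = 1) {a ε : ℝ}
    (ha : 0 ≤ a) (hpvar : a * ((∑ i, w i) - ⟪p, 1⟫_[ℝ, w] ^ 2) ≤ ε * ∑ i, w i)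
    (hqvar : a * ((∑ i, w i) - ⟪q, 1⟫_[ℝ, w] ^ 2) ≤ ε * ∑ i, w i) :
    a - 2 * ε ≤ a * ⟪p, q⟫_[ℝ, w] := by
  have hone : ⟪(1 : ι → ℝ), 1⟫_[ℝ, w] = ∑ i, w i := by simp [wInner_eq_sum_mul]
  have hpm : 0 ≤ ⟪p, 1⟫_[ℝ, w] := wInner_nonneg hw hp zero_le_one
  have hqm : 0 ≤ ⟪q, 1⟫_[ℝ, w] := wInner_nonneg hw hq zero_le_one
  have hcov : (⟪p, 1⟫_[ℝ, w] + ⟪q, 1⟫_[ℝ, w]) ^ 2 ≤ (∑ i, w i) * (2 + 2 * ⟪p, q⟫_[ℝ, w]) := by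
    have h := sq_wInner_le hw (p + q) 1
    rw [hone] at h
    simp only [wInner_add_left, wInner_add_right, hpp, hqq, wInner_symm w q p] at h
    linarith
  generalize ⟪p, 1⟫_[ℝ, w] = m at *
  generalize ⟪q, 1⟫_[ℝ, w] = n at *
  generalize ∑ i, w i = W at *
  have hmean : a * W - ε * W ≤ a * (m * n) := by
    rcases le_total m n with hmn | hnm
    · linarith [mul_le_mul_of_nonneg_left (mul_le_mul_of_nonneg_left hmn hpm) ha]
    · linarith [mul_le_mul_of_nonneg_left (mul_le_mul_of_nonneg_left hnm hqm) ha]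
  refine le_of_mul_le_mul_right ?_ hw'
  nlinarith [mul_le_mul_of_nonneg_left hcov ha]

end WeightedInner

section Energy

open RCLike

variable {V : Type*} [Fintype V] {A : Matrix V V ℝ}

/-- The vertex degrees of the weighted graph with adjacency matrix `A`. -/
def weightedDegree (A : Matrix V V ℝ) (u : V) : ℝ :=
  ∑ v, A u v

theorem sum_weightedDegree_nonneg (hA : ∀ u v, 0 ≤ A u v) : 0 ≤ ∑ u, weightedDegree A u :=
  sum_nonneg fun u _ => sum_nonneg fun v _ => hA u v

/-- The quadratic form of the Laplacian `D - A`. The factor `1 / 2` is there because the double sum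
counts each edge twice. -/
def dirichletEnergy (A : Matrix V V ℝ) (f : V → ℝ) : ℝ :=
  (∑ u, ∑ v, A u v * (f u - f v) ^ 2) / 2

/-- The quadratic form of the signless Laplacian `D + A`, normalized like `dirichletEnergy`. -/
def signlessEnergy (A : Matrix V V ℝ) (f : V → ℝ) : ℝ :=
  (∑ u, ∑ v, A u v * (f u + f v) ^ 2) / 2

theorem sum_mul_add_mul_sq (hA : A.IsSymm) {s : ℝ} (hs : s ^ 2 = 1) (f : V → ℝ) :
    (∑ u, ∑ v, A u v * (f u + s * f v) ^ 2) / 2 =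
      ⟪f, f⟫_[ℝ, weightedDegree A] + s * (f ⬝ᵥ A.mulVec f) := by
  have hrow : ∑ u, ∑ v, A u v * f u ^ 2 = ⟪f, f⟫_[ℝ, weightedDegree A] := by
    simp_rw [wInner_eq_sum_mul, weightedDegree, sum_mul, sq]
  have hcol : ∑ u, ∑ v, A u v * f v ^ 2 = ⟪f, f⟫_[ℝ, weightedDegree A] := by
    rw [sum_comm, ← hrow]
    simp_rw [hA.apply]
  have hcross : ∑ u, ∑ v, A u v * (f u * f v) = f ⬝ᵥ A.mulVec f := by
    simp_rw [dotProduct, Matrix.mulVec, dotProduct, mul_sum, mul_left_comm]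
  have hexpand (u v : V) : A u v * (f u + s * f v) ^ 2 =
      A u v * f u ^ 2 + A u v * f v ^ 2 + 2 * s * (A u v * (f u * f v)) := by
    linear_combination A u v * f v ^ 2 * hs
  simp_rw [hexpand, sum_add_distrib, ← mul_sum, hrow, hcol, hcross]
  ring

theorem dirichletEnergy_eq_sub_dotProduct (hA : A.IsSymm) (f : V → ℝ) :
    dirichletEnergy A f = ⟪f, f⟫_[ℝ, weightedDegree A] - f ⬝ᵥ A.mulVec f := by
  simpa [dirichletEnergy, ← sub_eq_add_neg] using
    sum_mul_add_mul_sq hA (s := -1) (by norm_num) f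

theorem signlessEnergy_eq_add_dotProduct (hA : A.IsSymm) (f : V → ℝ) :
    signlessEnergy A f = ⟪f, f⟫_[ℝ, weightedDegree A] + f ⬝ᵥ A.mulVec f := by
  simpa [signlessEnergy] using sum_mul_add_mul_sq hA (s := 1) (by norm_num) f

theorem dirichletEnergy_nonneg (hA : ∀ u v, 0 ≤ A u v) (f : V → ℝ) : 0 ≤ dirichletEnergy A f :=
  div_nonneg (sum_nonneg fun u _ => sum_nonneg fun v _ => mul_nonneg (hA u v) (sq_nonneg _))
    zero_le_two

theorem signlessEnergy_nonneg (hA : ∀ u v, 0 ≤ A u v) (f : V → ℝ) : 0 ≤ signlessEnergy A f :=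
  div_nonneg (sum_nonneg fun u _ => sum_nonneg fun v _ => mul_nonneg (hA u v) (sq_nonneg _))
    zero_le_two

theorem dirichletEnergy_abs_le (hA : ∀ u v, 0 ≤ A u v) (f : V → ℝ) :
    dirichletEnergy A |f| ≤ signlessEnergy A f := by
  refine div_le_div_of_nonneg_right (sum_le_sum fun u _ => sum_le_sum fun v _ =>
    mul_le_mul_of_nonneg_left ?_ (hA u v)) zero_le_two
  rw [sq_le_sq, Pi.abs_apply, Pi.abs_apply, ← abs_neg (f v), ← sub_neg_eq_add]
  exact abs_abs_sub_abs_le_abs_sub (f u) (-f v)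

theorem sum_mul_abs_mul_le_sqrt (hA : ∀ u v, 0 ≤ A u v) (x y : V → V → ℝ) :
    ∑ u, ∑ v, A u v * (|x u v| * |y u v|) ≤
      √((∑ u, ∑ v, A u v * x u v ^ 2) * ∑ u, ∑ v, A u v * y u v ^ 2) := by
  have h := sq_wInner_le (w := fun z : V × V => A z.1 z.2) (fun z => hA z.1 z.2)
    (fun z => |x z.1 z.2|) fun z => |y z.1 z.2|
  simp_rw [wInner_eq_sum_mul, abs_mul_abs_self, Fintype.sum_prod_type, ← sq] at h
  exact Real.le_sqrt_of_sq_le h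

theorem sum_mul_abs_mul_sub_mul_le_sqrt_add_sqrt (hA : ∀ u v, 0 ≤ A u v) (f g : V → ℝ) :
    ∑ u, ∑ v, A u v * |f u * g u - f v * g v| ≤
      √(signlessEnergy A f * dirichletEnergy A g) +
        √(signlessEnergy A g * dirichletEnergy A f) := by
  have hcs (p q : V → ℝ) : ∑ u, ∑ v, A u v * (|p u + p v| * |q u - q v|) / 2 ≤
      √(signlessEnergy A p * dirichletEnergy A q) := by
    simp_rw [← sum_div]
    refine (div_le_div_of_nonneg_right (sum_mul_abs_mul_le_sqrt hA _ _) zero_le_two).trans_eq ?_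
    rw [signlessEnergy, dirichletEnergy, div_mul_div_comm, Real.sqrt_div' _ (by norm_num),
      Real.sqrt_mul_self zero_le_two]
  refine le_trans ?_ (add_le_add (hcs f g) (hcs g f))
  simp_rw [← sum_add_distrib]
  refine sum_le_sum fun u _ => sum_le_sum fun v _ => ?_
  rw [mul_div_assoc (A u v), mul_div_assoc (A u v), ← mul_add]
  refine mul_le_mul_of_nonneg_left ?_ (hA u v)
  calc |f u * g u - f v * g v|
      = |(f u + f v) * (g u - g v) / 2 + (g u + g v) * (f u - f v) / 2| := by ring_nf
    _ ≤ |(f u + f v) * (g u - g v) / 2| + |(g u + g v) * (f u - f v) / 2| := abs_add_le _ _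
    _ = |f u + f v| * |g u - g v| / 2 + |g u + g v| * |f u - f v| / 2 := by
      simp [abs_div, abs_mul]

end Energy

section Eigenbasis

open RCLike

variable {V ι : Type*} [Fintype V] [Fintype ι] {A : Matrix V V ℝ} {d : V → ℝ} {μ : ι → ℝ}
  {b : ι → V → ℝ}

/-- `b` is a basis of eigenvectors of `D⁻¹A` with eigenvalues `μ`, orthonormal for the inner product
weighted by `d`. The eigenvalue equation is written as `A bᵢ = μᵢ D bᵢ`, and completeness as
Parseval's identity. -/
structure IsWeightedEigenbasis (A : Matrix V V ℝ) (d : V → ℝ) (μ : ι → ℝ) (b : ι → V → ℝ) :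
    Prop where
  wInner_self : ∀ i, ⟪b i, b i⟫_[ℝ, d] = 1
  wInner_eq_zero : Pairwise fun i j => ⟪b i, b j⟫_[ℝ, d] = 0
  mulVec_eq : ∀ i, A.mulVec (b i) = μ i • (d * b i)
  parseval : ∀ f g, ∑ i, ⟪f, b i⟫_[ℝ, d] * ⟪g, b i⟫_[ℝ, d] = ⟪f, g⟫_[ℝ, d]

theorem mul_dotProduct_eq_wInner (d f g : V → ℝ) : (d * f) ⬝ᵥ g = ⟪f, g⟫_[ℝ, d] := by
  simp_rw [wInner_eq_sum_mul, dotProduct, Pi.mul_apply, mul_assoc]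

theorem wInner_div_right (hd : ∀ u, d u ≠ 0) (f g : V → ℝ) : ⟪f, g / d⟫_[ℝ, d] = f ⬝ᵥ g := by
  rw [wInner_symm, ← mul_dotProduct_eq_wInner, dotProduct_comm]
  congr 1
  exact funext fun u => mul_div_cancel₀ (g u) (hd u)

namespace IsWeightedEigenbasis

theorem dotProduct_mulVec_right (hb : IsWeightedEigenbasis A d μ b) (hA : A.IsSymm) (f : V → ℝ)
    (i : ι) : b i ⬝ᵥ A.mulVec f = μ i * ⟪f, b i⟫_[ℝ, d] := by
  rw [Matrix.dotProduct_mulVec, ← Matrix.mulVec_transpose, hA.eq, hb.mulVec_eq, smul_dotProduct,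
    mul_dotProduct_eq_wInner, wInner_symm, smul_eq_mul]

theorem dotProduct_mulVec_self (hb : IsWeightedEigenbasis A d μ b) (hA : A.IsSymm)
    (hd : ∀ u, d u ≠ 0) (f : V → ℝ) :
    f ⬝ᵥ A.mulVec f = ∑ i, μ i * ⟪f, b i⟫_[ℝ, d] ^ 2 := by
  rw [← wInner_div_right hd, ← hb.parseval]
  refine sum_congr rfl fun i _ => ?_
  rw [wInner_symm d (A.mulVec f / d), wInner_div_right hd, hb.dotProduct_mulVec_right hA]
  ring

theorem dirichletEnergy_eq_sum (hb : IsWeightedEigenbasis A (weightedDegree A) μ b)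
    (hA : A.IsSymm) (hd : ∀ u, weightedDegree A u ≠ 0) (f : V → ℝ) :
    dirichletEnergy A f = ∑ i, (1 - μ i) * ⟪f, b i⟫_[ℝ, weightedDegree A] ^ 2 := by
  rw [dirichletEnergy_eq_sub_dotProduct hA, hb.dotProduct_mulVec_self hA hd, ← hb.parseval]
  simp_rw [← sum_sub_distrib, sub_mul, one_mul, sq]

theorem dirichletEnergy_eq_one_sub (hb : IsWeightedEigenbasis A (weightedDegree A) μ b)
    (hA : A.IsSymm) (i : ι) : dirichletEnergy A (b i) = 1 - μ i := by
  rw [dirichletEnergy_eq_sub_dotProduct hA, hb.dotProduct_mulVec_right hA, hb.wInner_self, mul_one]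

theorem signlessEnergy_eq_one_add (hb : IsWeightedEigenbasis A (weightedDegree A) μ b)
    (hA : A.IsSymm) (i : ι) : signlessEnergy A (b i) = 1 + μ i := by
  rw [signlessEnergy_eq_add_dotProduct hA, hb.dotProduct_mulVec_right hA, hb.wInner_self, mul_one]

theorem wInner_one_eq_zero (hb : IsWeightedEigenbasis A (weightedDegree A) μ b) (hA : A.IsSymm)
    {i : ι} (hi : μ i ≠ 1) : ⟪b i, 1⟫_[ℝ, weightedDegree A] = 0 := by
  have hdeg : A.mulVec 1 = weightedDegree A * 1 := by
    ext u
    simp [Matrix.mulVec, dotProduct, weightedDegree]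
  have h := hb.dotProduct_mulVec_right hA 1 i
  rw [hdeg, dotProduct_comm, mul_dotProduct_eq_wInner, wInner_symm _ 1] at h
  exact eq_zero_of_mul_eq_self_left hi h.symm

theorem sq_wInner_one (hb : IsWeightedEigenbasis A (weightedDegree A) μ b) (hA : A.IsSymm)
    {i₀ : ι} (hμ : ∀ i ≠ i₀, μ i ≠ 1) (f : V → ℝ) :
    ⟪f, 1⟫_[ℝ, weightedDegree A] ^ 2 =
      (∑ u, weightedDegree A u) * ⟪f, b i₀⟫_[ℝ, weightedDegree A] ^ 2 := by
  have hexpand (g : V → ℝ) : ⟪g, 1⟫_[ℝ, weightedDegree A] =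
      ⟪g, b i₀⟫_[ℝ, weightedDegree A] * ⟪b i₀, 1⟫_[ℝ, weightedDegree A] := by
    rw [← hb.parseval, wInner_symm _ (b i₀)]
    refine sum_eq_single i₀ (fun i _ hi => ?_) (by simp)
    rw [wInner_symm _ 1, hb.wInner_one_eq_zero hA (hμ i hi), mul_zero]
  have hvol : ∑ u, weightedDegree A u = ⟪(1 : V → ℝ), 1⟫_[ℝ, weightedDegree A] := by
    simp [wInner_eq_sum_mul]
  rw [hvol, hexpand f, hexpand 1, wInner_symm _ 1]
  ring

theorem gap_mul_sub_sq_wInner_le (hb : IsWeightedEigenbasis A (weightedDegree A) μ b)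
    (hA : A.IsSymm) (hA₀ : ∀ u v, 0 ≤ A u v) (hd : ∀ u, weightedDegree A u ≠ 0) {i₀ : ι} {a : ℝ}
    (hgap : ∀ i ≠ i₀, a ≤ 1 - μ i) (f : V → ℝ) :
    a * (⟪f, f⟫_[ℝ, weightedDegree A] - ⟪f, b i₀⟫_[ℝ, weightedDegree A] ^ 2) ≤
      dirichletEnergy A f := by
  have hμ₀ : 0 ≤ 1 - μ i₀ := hb.dirichletEnergy_eq_one_sub hA i₀ ▸ dirichletEnergy_nonneg hA₀ _
  rw [hb.dirichletEnergy_eq_sum hA hd, ← hb.parseval, ← add_sum_erase _ _ (mem_univ i₀),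
    ← add_sum_erase _ _ (mem_univ i₀), ← sq, add_sub_cancel_left, mul_sum]
  refine le_add_of_nonneg_of_le (mul_nonneg hμ₀ (sq_nonneg _)) (sum_le_sum fun i hi => ?_)
  rw [← sq]
  exact mul_le_mul_of_nonneg_right (hgap i (ne_of_mem_erase hi)) (sq_nonneg _)

theorem gap_mul_variance_le (hb : IsWeightedEigenbasis A (weightedDegree A) μ b) (hA : A.IsSymm)
    (hA₀ : ∀ u v, 0 ≤ A u v) (hd : ∀ u, weightedDegree A u ≠ 0) {i₀ : ι} {a : ℝ} (ha : 0 < a)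
    (hgap : ∀ i ≠ i₀, a ≤ 1 - μ i) (f : V → ℝ) :
    a * ((∑ u, weightedDegree A u) * ⟪f, f⟫_[ℝ, weightedDegree A] -
        ⟪f, 1⟫_[ℝ, weightedDegree A] ^ 2) ≤
      dirichletEnergy A f * ∑ u, weightedDegree A u := by
  have hμ (i : ι) (hi : i ≠ i₀) : μ i ≠ 1 := fun h => by linarith [hgap i hi]
  rw [hb.sq_wInner_one hA hμ, ← mul_sub, mul_left_comm, mul_comm]
  exact mul_le_mul_of_nonneg_right (hb.gap_mul_sub_sq_wInner_le hA hA₀ hd hgap f)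
    (sum_weightedDegree_nonneg hA₀)

theorem gap_mul_abs_variance_le (hb : IsWeightedEigenbasis A (weightedDegree A) μ b)
    (hA : A.IsSymm) (hA₀ : ∀ u v, 0 ≤ A u v) (hd : ∀ u, weightedDegree A u ≠ 0) {i₀ : ι} {a : ℝ}
    (ha : 0 < a) (hgap : ∀ i ≠ i₀, a ≤ 1 - μ i) (i : ι) :
    a * ((∑ u, weightedDegree A u) - ⟪|b i|, 1⟫_[ℝ, weightedDegree A] ^ 2) ≤
      (1 + μ i) * ∑ u, weightedDegree A u := by
  have henergy : dirichletEnergy A |b i| ≤ 1 + μ i :=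
    hb.signlessEnergy_eq_one_add hA i ▸ dirichletEnergy_abs_le hA₀ (b i)
  have hpoincare := hb.gap_mul_variance_le hA hA₀ hd ha hgap |b i|
  rw [wInner_abs_self, hb.wInner_self, mul_one] at hpoincare
  exact hpoincare.trans (mul_le_mul_of_nonneg_right henergy (sum_weightedDegree_nonneg hA₀))

theorem sum_mul_abs_mul_sub_mul_le (hb : IsWeightedEigenbasis A (weightedDegree A) μ b)
    (hA : A.IsSymm) (hA₀ : ∀ u v, 0 ≤ A u v) {i j : ι} {ε : ℝ} (hi : 1 + μ i ≤ ε)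
    (hj : 1 + μ j ≤ ε) :
    ∑ u, ∑ v, A u v * |b i u * b j u - b i v * b j v| ≤ 2 * √(2 * ε) := by
  have hμ (k : ι) : 0 ≤ 1 + μ k := hb.signlessEnergy_eq_one_add hA k ▸ signlessEnergy_nonneg hA₀ _
  have hsqrt {k l : ι} (hk : 1 + μ k ≤ ε) : √((1 + μ k) * (1 - μ l)) ≤ √(2 * ε) :=
    Real.sqrt_le_sqrt (by nlinarith [hμ k, hμ l])
  have hvariation := sum_mul_abs_mul_sub_mul_le_sqrt_add_sqrt hA₀ (b i) (b j)
  simp only [hb.signlessEnergy_eq_one_add hA, hb.dirichletEnergy_eq_one_sub hA] at hvariation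
  exact hvariation.trans ((add_le_add (hsqrt hi) (hsqrt hj)).trans_eq (two_mul _).symm)

end IsWeightedEigenbasis

theorem eigenvalues₀_eq_of_charpoly_eq {n : Type*} [Fintype n] {N : Matrix n n ℝ}
    (hN : N.IsHermitian) {μ : Fin (Fintype.card n) → ℝ} (hμ : Antitone μ)
    (hchar : N.charpoly = ∏ i, (X - C (μ i))) : hN.eigenvalues₀ = μ := by
  rw [← List.ofFn_inj, ← hN.sort_roots_charpoly_eq_eigenvalues₀, hchar,
    Polynomial.roots_prod _ _ (by simp [prod_ne_zero_iff, X_sub_C_ne_zero])]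
  simp only [roots_X_sub_C, Multiset.bind_singleton, Fin.univ_val_map, Multiset.map_coe,
    List.map_ofFn, Function.comp_def, RCLike.re_to_real, Multiset.coe_sort]
  apply List.mergeSort_of_pairwise
  simp_rw [decide_eq_true_eq, ← List.sortedGE_iff_pairwise]
  exact hμ.sortedGE_ofFn

theorem exists_orthonormalBasis_mulVec_eq {n : Type*} [Fintype n] {N : Matrix n n ℝ}
    (hN : N.IsSymm) {μ : Fin (Fintype.card n) → ℝ} (hμ : Antitone μ)
    (hchar : N.charpoly = ∏ i, (X - C (μ i))) :
    ∃ B : OrthonormalBasis (Fin (Fintype.card n)) ℝ (EuclideanSpace ℝ n),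
      ∀ i, N.mulVec (B i) = μ i • (B i : n → ℝ) := by
  have hN' : N.IsHermitian := by
    rwa [Matrix.IsHermitian, Matrix.conjTranspose_eq_transpose_of_trivial]
  let e : Fin (Fintype.card n) ≃ n := Fintype.equivOfCardEq (Fintype.card_fin _)
  refine ⟨hN'.eigenvectorBasis.reindex e.symm, fun i => ?_⟩
  have hμi : hN'.eigenvalues (e i) = μ i := by
    rw [← eigenvalues₀_eq_of_charpoly_eq hN' hμ hchar, Matrix.IsHermitian.eigenvalues,
      Equiv.symm_apply_apply]
  simpa [hμi] using hN'.mulVec_eigenvectorBasis (e i)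

/-- The diagonal matrix `D^(-1/2)`, which maps an orthonormal basis to one that is orthonormal for
the inner product weighted by `d`. -/
def invSqrtDiagonal (d : V → ℝ) : Matrix V V ℝ :=
  Matrix.diagonal fun u => (√(d u))⁻¹

theorem isWeightedEigenbasis_invSqrtDiagonal_mulVec (hd : ∀ u, 0 < d u)
    (B : OrthonormalBasis ι ℝ (EuclideanSpace ℝ V))
    (hB : ∀ i, (invSqrtDiagonal d * A * invSqrtDiagonal d).mulVec (B i) = μ i • (B i : V → ℝ)) :
    IsWeightedEigenbasis A d μ fun i => (invSqrtDiagonal d).mulVec (B i) := by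
  have hsqrt (u : V) : √(d u) ≠ 0 := (Real.sqrt_pos.2 (hd u)).ne'
  have hR (f : V → ℝ) (u : V) : (invSqrtDiagonal d).mulVec f u = (√(d u))⁻¹ * f u :=
    Matrix.mulVec_diagonal _ _ _
  have hinner (f g : V → ℝ) := wInner_eq_inner_sqrt_mul (fun u => (hd u).le) f g
  have hscale (i : ι) :
      WithLp.toLp 2 (fun u => √(d u) * (invSqrtDiagonal d).mulVec (B i) u) = B i := by
    ext u
    simp [hR, hsqrt u]
  refine ⟨fun i => ?_, fun i j hij => ?_, fun i => ?_, fun f g => ?_⟩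
  · rw [hinner, hscale, real_inner_self_eq_norm_sq, B.norm_eq_one, one_pow]
  · change ⟪(invSqrtDiagonal d).mulVec (B i), (invSqrtDiagonal d).mulVec (B j)⟫_[ℝ, d] = 0
    rw [hinner, hscale, hscale, B.orthonormal.inner_eq_zero hij]
  · ext u
    have h : (√(d u))⁻¹ * A.mulVec ((invSqrtDiagonal d).mulVec (B i)) u = μ i * B i u := by
      rw [← hR, Matrix.mulVec_mulVec, Matrix.mulVec_mulVec]
      exact congrFun (hB i) u
    calc A.mulVec ((invSqrtDiagonal d).mulVec (B i)) u = √(d u) * (μ i * B i u) := by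
          rw [← h, mul_inv_cancel_left₀ (hsqrt u)]
      _ = μ i * (d u * ((√(d u))⁻¹ * B i u)) := by
          rw [← mul_assoc (d u), ← div_eq_mul_inv, Real.div_sqrt, mul_left_comm]
      _ = (μ i • (d * (invSqrtDiagonal d).mulVec (B i))) u := by
          simp [hR]
  · simp_rw [hinner, hscale]
    simp_rw [real_inner_comm (B _) (WithLp.toLp 2 fun u => √(d u) * g u)]
    exact B.sum_inner_mul_inner _ _

theorem exists_isWeightedEigenbasis (hA : A.IsSymm) (hd : ∀ u, 0 < d u)
    {μ : Fin (Fintype.card V) → ℝ} (hμ : Antitone μ)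
    (hchar : (Matrix.diagonal d⁻¹ * A).charpoly = ∏ i, (X - C (μ i))) :
    ∃ b, IsWeightedEigenbasis A d μ b := by
  have hsymm : (invSqrtDiagonal d * A * invSqrtDiagonal d).IsSymm := by
    rw [Matrix.IsSymm, Matrix.transpose_mul, Matrix.transpose_mul, hA.eq, invSqrtDiagonal,
      Matrix.diagonal_transpose, Matrix.mul_assoc]
  have hsimilar : (invSqrtDiagonal d * A * invSqrtDiagonal d).charpoly =
      ∏ i, (X - C (μ i)) := by
    rw [← hchar, Matrix.charpoly_mul_comm, ← Matrix.mul_assoc, invSqrtDiagonal,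
      Matrix.diagonal_mul_diagonal]
    simp_rw [← mul_inv, Real.mul_self_sqrt (hd _).le, Pi.inv_def]
  obtain ⟨B, hB⟩ := exists_orthonormalBasis_mulVec_eq hsymm hμ hsimilar
  exact ⟨_, isWeightedEigenbasis_invSqrtDiagonal_mulVec hd B hB⟩

end Eigenbasis

section WeightedGraph

open RCLike

variable {V : Type*} [Fintype V] {A : Matrix V V ℝ} {h : ℝ}

theorem expansion_mul_gap_sub_le [Nonempty V] {ι : Type*} [Fintype ι] {μ : ι → ℝ}
    {b : ι → V → ℝ} (hb : IsWeightedEigenbasis A (weightedDegree A) μ b) (hA : A.IsSymm)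
    (hA₀ : ∀ u v, 0 ≤ A u v) (hdeg : ∀ u, 0 < weightedDegree A u) (hh : 0 ≤ h)
    (hcut : ∀ S : Finset V,
      h * min (∑ u ∈ S, weightedDegree A u) (∑ u ∈ Sᶜ, weightedDegree A u) ≤ cutWeight A S)
    {i₀ : ι} {a : ℝ} (ha : 0 < a) (hgap : ∀ i ≠ i₀, a ≤ 1 - μ i) {j k : ι} (hjk : j ≠ k)
    {ε : ℝ} (hj : 1 + μ j ≤ ε) (hk : 1 + μ k ≤ ε) :
    h * (a - 2 * ε) ≤ 2 * a * √(2 * ε) := by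
  have hdeg₀ : 0 ≤ weightedDegree A := fun u => (hdeg u).le
  have hvol : 0 < ∑ u, weightedDegree A u := sum_pos (fun u _ => hdeg u) univ_nonempty
  have hself (i : ι) : ⟪|b i|, |b i|⟫_[ℝ, weightedDegree A] = 1 := by
    rw [wInner_abs_self, hb.wInner_self]
  have hvar {i : ι} (hi : 1 + μ i ≤ ε) :
      a * ((∑ u, weightedDegree A u) - ⟪|b i|, 1⟫_[ℝ, weightedDegree A] ^ 2) ≤
        ε * ∑ u, weightedDegree A u :=
    (hb.gap_mul_abs_variance_le hA hA₀ (fun u => (hdeg u).ne') ha hgap i).trans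
      (mul_le_mul_of_nonneg_right hi hvol.le)
  have hoverlap : a - 2 * ε ≤ a * ∑ u, weightedDegree A u * |b j u * b k u| := by
    simpa only [wInner_eq_sum_mul, Pi.abs_apply, ← abs_mul] using
      mul_wInner_ge_of_variance_le hdeg₀ hvol (abs_nonneg (b j)) (abs_nonneg (b k))
        (hself j) (hself k) ha.le (hvar hj) (hvar hk)
  have hmean : ∑ u, weightedDegree A u * (b j u * b k u) = 0 := by
    rw [← wInner_eq_sum_mul, hb.wInner_eq_zero hjk]
  calc h * (a - 2 * ε) ≤ h * (a * ∑ u, weightedDegree A u * |b j u * b k u|) :=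
        mul_le_mul_of_nonneg_left hoverlap hh
    _ = a * (h * ∑ u, weightedDegree A u * |b j u * b k u|) := mul_left_comm _ _ _
    _ ≤ a * ∑ u, ∑ v, A u v * |b j u * b k u - b j v * b k v| :=
        mul_le_mul_of_nonneg_left (expansion_mul_sum_abs_le hdeg₀ hvol hh hcut hmean) ha.le
    _ ≤ a * (2 * √(2 * ε)) :=
        mul_le_mul_of_nonneg_left (hb.sum_mul_abs_mul_sub_mul_le hA hA₀ hj hk) ha.le
    _ = 2 * a * √(2 * ε) := by ring

theorem sq_div_mul_sqrt_sub_one_sq_le {a ε : ℝ} (ha : 0 < a) (hh : 0 < h) (hε : 0 ≤ ε)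
    (H : h * (a - 2 * ε) ≤ 2 * a * √(2 * ε)) :
    a ^ 2 / (2 * h ^ 2) * (√(1 + h ^ 2 / a) - 1) ^ 2 ≤ ε := by
  have hsq : √(2 * ε) ^ 2 = 2 * ε := Real.sq_sqrt (by linarith)
  have hupper : √(1 + h ^ 2 / a) ≤ √(2 * ε) * h / a + 1 := by
    rw [Real.sqrt_le_left (by positivity), ← sub_nonneg]
    have hdiff : (√(2 * ε) * h / a + 1) ^ 2 - (1 + h ^ 2 / a) =
        h * (2 * a * √(2 * ε) - h * (a - 2 * ε)) / a ^ 2 := by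
      field_simp
      linear_combination h ^ 2 * hsq
    rw [hdiff]
    exact div_nonneg (mul_nonneg hh.le (sub_nonneg.2 H)) (sq_nonneg a)
  have hlower : 0 ≤ √(1 + h ^ 2 / a) - 1 := by
    rw [sub_nonneg, Real.one_le_sqrt, le_add_iff_nonneg_right]
    positivity
  calc a ^ 2 / (2 * h ^ 2) * (√(1 + h ^ 2 / a) - 1) ^ 2
      ≤ a ^ 2 / (2 * h ^ 2) * (√(2 * ε) * h / a) ^ 2 := by
        gcongr
        exact sub_le_iff_le_add.2 hupper
    _ = √(2 * ε) ^ 2 / 2 := by field_simp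
    _ = ε := by rw [hsq, mul_div_cancel_left₀ _ two_ne_zero]

theorem one_add_secondSmallest_ge_general (hA : A.IsSymm) (hA₀ : ∀ u v, 0 ≤ A u v)
    (hdeg : ∀ u, 0 < weightedDegree A u) (hh : 0 < h)
    (hcut : ∀ S : Finset V,
      h * min (∑ u ∈ S, weightedDegree A u) (∑ u ∈ Sᶜ, weightedDegree A u) ≤ cutWeight A S)
    (hn : 2 ≤ Fintype.card V) (μs : Fin (Fintype.card V) → ℝ) (hanti : Antitone μs)
    (hchar : (Matrix.diagonal (weightedDegree A)⁻¹ * A).charpoly = ∏ i, (X - C (μs i))) :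
    1 + μs ⟨Fintype.card V - 2, Nat.sub_lt (two_pos.trans_le hn) two_pos⟩ ≥
      (1 - μs ⟨1, hn⟩) ^ 2 / (2 * h ^ 2) *
        (√(1 + h ^ 2 / (1 - μs ⟨1, hn⟩)) - 1) ^ 2 := by
  obtain ⟨b, hb⟩ := exists_isWeightedEigenbasis hA hdeg hanti hchar
  have hμ (i) : 0 ≤ 1 + μs i := hb.signlessEnergy_eq_one_add hA i ▸ signlessEnergy_nonneg hA₀ _
  have hμ' (i) : 0 ≤ 1 - μs i := hb.dirichletEnergy_eq_one_sub hA i ▸ dirichletEnergy_nonneg hA₀ _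
  rcases (hμ' ⟨1, hn⟩).eq_or_lt with ha | ha
  · simpa [← ha] using hμ _
  have hpos : 0 < Fintype.card V := two_pos.trans_le hn
  have : Nonempty V := Fintype.card_pos_iff.1 hpos
  have hgap (i : Fin (Fintype.card V)) (hi : i ≠ ⟨0, hpos⟩) :
      1 - μs ⟨1, hn⟩ ≤ 1 - μs i :=
    sub_le_sub_left (hanti <| Nat.one_le_iff_ne_zero.2 fun hi' => hi (Fin.ext hi')) 1
  have hlast : 1 + μs ⟨Fintype.card V - 1, Nat.sub_lt hpos one_pos⟩ ≤
      1 + μs ⟨Fintype.card V - 2, Nat.sub_lt hpos two_pos⟩ :=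
    add_le_add_right (hanti <| Nat.sub_le_sub_left one_le_two _) 1
  have hne : Fintype.card V - 2 ≠ Fintype.card V - 1 := by omega
  exact sq_div_mul_sqrt_sub_one_sq_le ha hh (hμ _) <|
    expansion_mul_gap_sub_le hb hA hA₀ hdeg hh.le hcut ha hgap
      (mt Fin.mk.inj hne) le_rfl hlast

end WeightedGraph

section UnweightedGraph

variable {V : Type*} [Fintype V] (G : SimpleGraph V)

theorem weightedDegree_adjMatrix :
    weightedDegree (G.adjMatrix ℝ) = fun u => (G.degree u : ℝ) := by
  ext u
  simp [weightedDegree, SimpleGraph.adjMatrix_apply, ← SimpleGraph.card_neighborFinset_eq_degree,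
    SimpleGraph.neighborFinset_eq_filter]

theorem cutWeight_adjMatrix (S : Finset V) : cutWeight (G.adjMatrix ℝ) S = bdry G S := by
  simp only [cutWeight, bdry, SimpleGraph.adjMatrix_apply]

theorem normAdj_eq_diagonal_mul :
    normAdj G = Matrix.diagonal (weightedDegree (G.adjMatrix ℝ))⁻¹ * G.adjMatrix ℝ := by
  ext u v
  rw [Matrix.diagonal_mul, SimpleGraph.adjMatrix_apply, mul_ite, mul_one, mul_zero,
    weightedDegree_adjMatrix]
  rfl

theorem bdry_nonneg (S : Finset V) : 0 ≤ bdry G S :=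
  sum_nonneg fun _ _ => sum_nonneg fun _ _ => by positivity

theorem vol_nonneg (S : Finset V) : 0 ≤ vol G S :=
  sum_nonneg fun _ _ => Nat.cast_nonneg _

theorem cheeger_mul_min_vol_le (S : Finset V) :
    cheeger G * min (vol G S) (vol G Sᶜ) ≤ bdry G S := by
  rcases (le_min (vol_nonneg G S) (vol_nonneg G Sᶜ)).eq_or_lt with hmin | hmin
  · rw [← hmin, mul_zero]
    exact bdry_nonneg G S
  have hne : S.Nonempty := nonempty_iff_ne_empty.2 fun hS => by simp [vol, hS] at hmin
  have hne_univ : S ≠ univ := fun hS => by simp [vol, hS] at hmin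
  rw [← le_div_iff₀ hmin]
  refine csInf_le ⟨0, ?_⟩ ⟨S, hne, hne_univ, rfl⟩
  rintro _ ⟨T, -, -, rfl⟩
  exact div_nonneg (bdry_nonneg G T) (le_min (vol_nonneg G T) (vol_nonneg G Tᶜ))

variable {G}

theorem vol_pos [Nontrivial V] (hG : G.Connected) {S : Finset V} (hS : S.Nonempty) :
    0 < vol G S :=
  sum_pos (fun u _ => Nat.cast_pos.2 (hG.preconnected.degree_pos_of_nontrivial u)) hS

theorem bdry_pos (hG : G.Connected) {S : Finset V} (hS : S.Nonempty) (hS' : S ≠ univ) :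
    0 < bdry G S := by
  obtain ⟨u, hu⟩ := hS
  obtain ⟨v, hv⟩ : ∃ v, v ∉ S := by simpa [eq_univ_iff_forall] using hS'
  obtain ⟨p⟩ := hG.preconnected u v
  obtain ⟨e, -, hfst, hsnd⟩ := p.exists_boundary_dart S hu hv
  refine sum_pos' (fun _ _ => sum_nonneg fun _ _ => by positivity) ⟨e.fst, hfst, ?_⟩
  refine sum_pos' (fun _ _ => by positivity) ⟨e.snd, mem_compl.2 hsnd, ?_⟩
  rw [if_pos e.adj]
  exact one_pos

theorem cheeger_pos [Nontrivial V] (hG : G.Connected) : 0 < cheeger G := by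
  have hmem : cheeger G ∈ {x : ℝ | ∃ S : Finset V, S.Nonempty ∧ S ≠ univ ∧
      x = bdry G S / min (vol G S) (vol G Sᶜ)} := by
    refine Set.Nonempty.csInf_mem ?_ ?_
    · obtain ⟨u⟩ := hG.nonempty
      exact ⟨_, {u}, singleton_nonempty u, singleton_ne_univ u, rfl⟩
    · exact (Set.finite_range fun S : Finset V => bdry G S / min (vol G S) (vol G Sᶜ)).subset
        fun x ⟨S, _, _, hx⟩ => ⟨S, hx.symm⟩
  obtain ⟨S, hS, hS', hcheeger⟩ := hmem
  rw [hcheeger]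
  exact div_pos (bdry_pos hG hS hS')
    (lt_min (vol_pos hG hS)
      (vol_pos hG (nonempty_iff_ne_empty.2 (mt (compl_eq_empty_iff S).1 hS'))))

end UnweightedGraph

/-- **Theorem 1**: for a finite connected graph with normalized adjacency eigenvalues
`μs (n-1) = μₙ ≤ ⋯ ≤ μs 1 = μ₂ ≤ μs 0 = μ₁ = 1` (listed with multiplicity, in
decreasing order, as the roots of the characteristic polynomial of `D⁻¹A`) and
edge-expansion `h`, one has
`1 + μ_{n-1} ≥ ((1-μ₂)²/(2h²)) · (√(1 + h²/(1-μ₂)) - 1)²`. -/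
theorem one_add_secondSmallest_ge {V : Type*} [Fintype V] (G : SimpleGraph V)
    (hconn : G.Connected) (hn : 2 ≤ Fintype.card V)
    (μs : Fin (Fintype.card V) → ℝ) (hanti : Antitone μs)
    (hchar : (normAdj G).charpoly = ∏ i, (X - C (μs i)))
    (hμ1 : μs ⟨0, by omega⟩ = 1) :
    1 + μs ⟨Fintype.card V - 2, by omega⟩ ≥
      (1 - μs ⟨1, by omega⟩) ^ 2 / (2 * cheeger G ^ 2) *
        (Real.sqrt (1 + cheeger G ^ 2 / (1 - μs ⟨1, by omega⟩)) - 1) ^ 2 := by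
  have : Nontrivial V := Fintype.one_lt_card_iff_nontrivial.1 hn
  refine one_add_secondSmallest_ge_general G.isSymm_adjMatrix
    (fun u v => by rw [SimpleGraph.adjMatrix_apply]; positivity) (fun u => ?_) (cheeger_pos hconn)
    (fun S => ?_) hn μs hanti (by rwa [← normAdj_eq_diagonal_mul])
  · rw [weightedDegree_adjMatrix]
    exact Nat.cast_pos.2 (hconn.preconnected.degree_pos_of_nontrivial u)
  · rw [weightedDegree_adjMatrix, cutWeight_adjMatrix]
    exact cheeger_mul_min_vol_le G S

end
end

section
/- Let G=(V,E) be a finite, connected, non-bipartite, vertex-transitive graph of degree d, with normalized adjacency eigenvalues μ_n ≤ … ≤ μ_2 ≤ μ_1 = 1. Then 1 + μ_n ≥ min{ 2/d, 2(√(1 + (1−μ_2)/4) − 1)^2 }. -/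
open Finset Polynomial

noncomputable section
open scoped Classical

/-- A graph is vertex-transitive if its automorphism group acts transitively on vertices. -/
def VertexTransitive {V : Type*} (G : SimpleGraph V) : Prop :=
  ∀ u v : V, ∃ φ : G ≃g G, φ u = v

/-!
Let `P` be a symmetric Markov kernel on `n` points with spectral gap `γ`, and let `f` be an
eigenvector for an eigenvalue `μ` near `-1`. As `|f| ⬝ᵥ P |f| ≥ -(f ⬝ᵥ P f)`, the gap forces `|f|`
to be nearly constant: `(∑ |f|)² ≥ (1 - (1 + μ) / γ) n ‖f‖²`. In a two-dimensional eigenspace there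
are three vectors of equal length with sum zero. Three real numbers with sum zero cannot have nearly
equal absolute values, so not all three vectors can have nearly constant modulus; quantitatively,
`γ ≤ 9 (1 + μ)`.

Hence if `9 (1 + μ) < γ`, then the eigenspace is a line, so every automorphism of the graph maps `f`
to `± f`, and on a vertex-transitive graph `|f|` is constant. As the graph is not bipartite, `f`
then takes the same value at the two ends of some edge `x y`, and the eigenvalue equation at `x`
yields `2 / d ≤ 1 + μ`.
-/

open Matrix

section Kernel

variable {V : Type*} [Fintype V] {P : Matrix V V ℝ}

/-- The Poincaré inequality with constant `γ`: the quadratic form of `1 - P` is at least `γ` on the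
vectors orthogonal to the constants. For a symmetric stochastic matrix `P` this says that the second
largest eigenvalue, counted with multiplicity, is at most `1 - γ`. -/
def HasSpectralGap (P : Matrix V V ℝ) (γ : ℝ) : Prop :=
  ∀ v : V → ℝ, 1 ⬝ᵥ v = 0 → γ * (v ⬝ᵥ v) ≤ v ⬝ᵥ v - v ⬝ᵥ P *ᵥ v

theorem dotProduct_self_pos_of_ne_zero {f : V → ℝ} (hf : f ≠ 0) : 0 < f ⬝ᵥ f :=
  dotProduct_star_self_pos_iff.2 hf

theorem abs_dotProduct_abs_self (f : V → ℝ) : |f| ⬝ᵥ |f| = f ⬝ᵥ f := by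
  simp only [dotProduct, Pi.abs_apply, abs_mul_abs_self]

theorem three_mul_sq_sum_abs_le {a : Fin 3 → ℝ} (ha : ∑ i, a i = 0) :
    3 * (∑ i, |a i|) ^ 2 ≤ 8 * ∑ i, a i * a i := by
  simp only [Fin.sum_univ_three] at ha ⊢
  rcases abs_cases (a 0) with ⟨h₀, _⟩ | ⟨h₀, _⟩ <;>
    rcases abs_cases (a 1) with ⟨h₁, _⟩ | ⟨h₁, _⟩ <;>
    rcases abs_cases (a 2) with ⟨h₂, _⟩ | ⟨h₂, _⟩ <;> rw [h₀, h₁, h₂] <;>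
    nlinarith [sq_nonneg (a 0 - a 1), sq_nonneg (a 1 - a 2), sq_nonneg (a 0 - a 2)]

theorem sq_sum_one_dotProduct_abs_le {f : Fin 3 → V → ℝ} (hf : ∑ i, f i = 0) :
    3 * (∑ i, 1 ⬝ᵥ |f i|) ^ 2 ≤ 8 * Fintype.card V * ∑ i, f i ⬝ᵥ f i := by
  have hpointwise (x : V) : 3 * (∑ i, |f i x|) ^ 2 ≤ 8 * ∑ i, f i x * f i x :=
    three_mul_sq_sum_abs_le (by simpa using congrFun hf x)
  calc 3 * (∑ i, 1 ⬝ᵥ |f i|) ^ 2 = 3 * (∑ x, ∑ i, |f i x|) ^ 2 := by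
        rw [Finset.sum_comm]
        simp only [one_dotProduct, Pi.abs_apply]
    _ ≤ 3 * (Fintype.card V * ∑ x, (∑ i, |f i x|) ^ 2) :=
        mul_le_mul_of_nonneg_left sq_sum_le_card_mul_sum_sq zero_le_three
    _ = Fintype.card V * ∑ x, 3 * (∑ i, |f i x|) ^ 2 := by rw [← Finset.mul_sum]; ring
    _ ≤ Fintype.card V * ∑ x, 8 * ∑ i, f i x * f i x :=
        mul_le_mul_of_nonneg_left (Finset.sum_le_sum fun x _ => hpointwise x) (Nat.cast_nonneg _)
    _ = 8 * Fintype.card V * ∑ i, f i ⬝ᵥ f i := by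
        rw [← Finset.mul_sum, Finset.sum_comm]
        simp only [dotProduct]
        ring

theorem one_dotProduct_mulVec (hsymm : P.IsSymm) (hone : P *ᵥ 1 = 1) (v : V → ℝ) :
    1 ⬝ᵥ P *ᵥ v = 1 ⬝ᵥ v := by
  rw [dotProduct_mulVec, ← mulVec_transpose, hsymm, hone]

theorem sum_mul_sub_sq (hsymm : P.IsSymm) (hone : P *ᵥ 1 = 1) (f : V → ℝ) :
    ∑ x, ∑ y, P x y * (f x - f y) ^ 2 = 2 * (f ⬝ᵥ f - f ⬝ᵥ P *ᵥ f) := by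
  have hrow (x : V) : ∑ y, P x y = 1 := by simpa [mulVec, dotProduct] using congrFun hone x
  have hleft : ∑ x, ∑ y, P x y * f x ^ 2 = f ⬝ᵥ f := by
    simp only [← Finset.sum_mul, hrow, dotProduct, one_mul, sq]
  have hright : ∑ x, ∑ y, P x y * f y ^ 2 = f ⬝ᵥ f := by
    rw [Finset.sum_comm, ← hleft]
    simp only [hsymm.apply]
  have hcross : ∑ x, ∑ y, P x y * (f x * f y) = f ⬝ᵥ P *ᵥ f := by
    simp only [dotProduct, mulVec, Finset.mul_sum, mul_left_comm]
  calc ∑ x, ∑ y, P x y * (f x - f y) ^ 2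
      = ∑ x, ∑ y, (P x y * f x ^ 2 + P x y * f y ^ 2 - 2 * (P x y * (f x * f y))) :=
        Finset.sum_congr rfl fun x _ => Finset.sum_congr rfl fun y _ => by ring
    _ = 2 * (f ⬝ᵥ f - f ⬝ᵥ P *ᵥ f) := by
        simp only [Finset.sum_sub_distrib, Finset.sum_add_distrib, ← Finset.mul_sum, hleft, hright,
          hcross]
        ring

theorem neg_dotProduct_mulVec_le_abs (hnonneg : ∀ x y, 0 ≤ P x y) (f : V → ℝ) :
    -(f ⬝ᵥ P *ᵥ f) ≤ |f| ⬝ᵥ P *ᵥ |f| := by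
  simp only [dotProduct, mulVec, Finset.mul_sum, ← Finset.sum_neg_distrib, Pi.abs_apply]
  refine Finset.sum_le_sum fun x _ => Finset.sum_le_sum fun y _ => ?_
  calc -(f x * (P x y * f y)) ≤ |f x * (P x y * f y)| := neg_le_abs _
    _ = |f x| * (P x y * |f y|) := by rw [abs_mul, abs_mul, abs_of_nonneg (hnonneg x y)]

theorem HasSpectralGap.mul_variance_le {γ : ℝ} (hgap : HasSpectralGap P γ) (hsymm : P.IsSymm)
    (hone : P *ᵥ 1 = 1) (f : V → ℝ) :
    γ * (Fintype.card V * (f ⬝ᵥ f) - (1 ⬝ᵥ f) ^ 2) ≤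
      Fintype.card V * (f ⬝ᵥ f - f ⬝ᵥ P *ᵥ f) := by
  cases isEmpty_or_nonempty V
  · simp [dotProduct]
  set n := (Fintype.card V : ℝ) with hn
  have hn_pos : 0 < n := Nat.cast_pos.2 Fintype.card_pos
  have hone_self : (1 : V → ℝ) ⬝ᵥ 1 = n := by simp [hn]
  have hcentred := hgap (n • f - (1 ⬝ᵥ f) • (1 : V → ℝ)) (by
    simp only [dotProduct_sub, dotProduct_smul, hone_self, smul_eq_mul]
    ring)
  simp only [mulVec_sub, mulVec_smul, hone, dotProduct_sub, sub_dotProduct, smul_dotProduct,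
    dotProduct_smul, smul_eq_mul, one_dotProduct_mulVec hsymm hone, hone_self,
    dotProduct_comm f 1] at hcentred
  refine le_of_mul_le_mul_left ?_ hn_pos
  linear_combination hcentred

theorem HasSpectralGap.mul_variance_abs_le {γ μ : ℝ} {f : V → ℝ} (hgap : HasSpectralGap P γ)
    (hsymm : P.IsSymm) (hone : P *ᵥ 1 = 1) (hnonneg : ∀ x y, 0 ≤ P x y) (hf : P *ᵥ f = μ • f) :
    γ * (Fintype.card V * (f ⬝ᵥ f) - (1 ⬝ᵥ |f|) ^ 2) ≤
      Fintype.card V * ((1 + μ) * (f ⬝ᵥ f)) := by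
  have hvar := hgap.mul_variance_le hsymm hone |f|
  have hneg := neg_dotProduct_mulVec_le_abs hnonneg f
  rw [hf, dotProduct_smul, smul_eq_mul] at hneg
  rw [abs_dotProduct_abs_self] at hvar
  refine hvar.trans (mul_le_mul_of_nonneg_left ?_ (Nat.cast_nonneg _))
  linarith

variable [DecidableEq V]

theorem dotProduct_mulVec_le_self (hsymm : P.IsSymm) (hP : P ∈ rowStochastic ℝ V) (f : V → ℝ) :
    f ⬝ᵥ P *ᵥ f ≤ f ⬝ᵥ f := by
  have henergy : 0 ≤ ∑ x, ∑ y, P x y * (f x - f y) ^ 2 := Finset.sum_nonneg fun x _ =>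
    Finset.sum_nonneg fun y _ => mul_nonneg (hP.1 x y) (sq_nonneg _)
  rw [sum_mul_sub_sq hsymm hP.2] at henergy
  linarith

section Eigenvector

variable (hsymm : P.IsSymm) (hP : P ∈ rowStochastic ℝ V) {γ μ : ℝ} {f g : V → ℝ}
include hsymm hP

theorem zero_le_one_add_of_mulVec_eq_smul (hf : P *ᵥ f = μ • f) (hf_ne : f ≠ 0) : 0 ≤ 1 + μ := by
  have hneg := neg_dotProduct_mulVec_le_abs hP.1 f
  have habs := dotProduct_mulVec_le_self hsymm hP |f|
  rw [hf, dotProduct_smul, smul_eq_mul] at hneg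
  rw [abs_dotProduct_abs_self] at habs
  refine nonneg_of_mul_nonneg_left ?_ (dotProduct_self_pos_of_ne_zero hf_ne)
  linarith

theorem HasSpectralGap.le_of_sum_eq_zero (hgap : HasSpectralGap P γ) {f : Fin 3 → V → ℝ}
    (hf : ∀ i, P *ᵥ f i = μ • f i) {N : ℝ} (hN : 0 < N) (hnorm : ∀ i, f i ⬝ᵥ f i = N)
    (hsum : ∑ i, f i = 0) : γ ≤ 9 * (1 + μ) := by
  have hf_ne : f 0 ≠ 0 := by
    intro h
    simp [← hnorm 0, h] at hN
  have hμ := zero_le_one_add_of_mulVec_eq_smul hsymm hP (hf 0) hf_ne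
  obtain ⟨x, -⟩ := Function.ne_iff.1 hf_ne
  have hn : (0 : ℝ) < Fintype.card V := Nat.cast_pos.2 (Fintype.card_pos_iff.2 ⟨x⟩)
  set n := (Fintype.card V : ℝ)
  by_contra! hlt
  have hlarge (i : Fin 3) : √(8 * n * N) < 3 * (1 ⬝ᵥ |f i|) := by
    have hvar := hgap.mul_variance_abs_le hsymm hP.2 hP.1 (hf i)
    rw [hnorm] at hvar
    have hnN : 0 < n * N := mul_pos hn hN
    have hvar_lt : γ * (9 * (n * N - (1 ⬝ᵥ |f i|) ^ 2)) < γ * (n * N) := by nlinarith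
    have hsq := lt_of_mul_lt_mul_left hvar_lt (by linarith)
    refine lt_of_pow_lt_pow_left₀ 2 (mul_nonneg zero_le_three ?_) ?_
    · exact dotProduct_nonneg_of_nonneg zero_le_one (abs_nonneg _)
    · rw [Real.sq_sqrt (by positivity)]
      linarith
  have hsum_large : 8 * n * N < (∑ i, 1 ⬝ᵥ |f i|) ^ 2 := by
    refine (Real.sqrt_lt_sqrt_iff (by positivity)).1 ?_
    rw [Real.sqrt_sq (Finset.sum_nonneg fun i _ =>
      dotProduct_nonneg_of_nonneg zero_le_one (abs_nonneg _)), Fin.sum_univ_three]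
    linarith [hlarge 0, hlarge 1, hlarge 2]
  have hsum_small := sq_sum_one_dotProduct_abs_le hsum
  simp only [hnorm, Fin.sum_const, nsmul_eq_mul, Nat.cast_ofNat] at hsum_small
  linarith

theorem HasSpectralGap.le_of_dotProduct_eq_zero (hgap : HasSpectralGap P γ) (hf : P *ᵥ f = μ • f)
    (hg : P *ᵥ g = μ • g) (hf_ne : f ≠ 0) (hg_ne : g ≠ 0) (hfg : f ⬝ᵥ g = 0) :
    γ ≤ 9 * (1 + μ) := by
  have hff := dotProduct_self_pos_of_ne_zero hf_ne
  have hgg := dotProduct_self_pos_of_ne_zero hg_ne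
  set s := √(3 * (f ⬝ᵥ f) / (g ⬝ᵥ g))
  have hs : s ^ 2 * (g ⬝ᵥ g) = 3 * (f ⬝ᵥ f) := by
    rw [Real.sq_sqrt (by positivity), div_mul_cancel₀ _ hgg.ne']
  -- Twice the cube roots of unity, in orthogonal coordinates along `f` and `g` with unit `‖f‖`.
  refine hgap.le_of_sum_eq_zero hsymm hP (f := ![(2 : ℝ) • f, s • g - f, -(s • g) - f])
    (N := 4 * (f ⬝ᵥ f)) ?_ (by positivity) ?_ ?_
  · refine Fin.forall_fin_succ.2 ⟨?_, Fin.forall_fin_two.2 ⟨?_, ?_⟩⟩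
    · change P *ᵥ ((2 : ℝ) • f) = μ • (2 : ℝ) • f
      rw [mulVec_smul, hf, smul_comm]
    · change P *ᵥ (s • g - f) = μ • (s • g - f)
      rw [mulVec_sub, mulVec_smul, hf, hg]
      module
    · change P *ᵥ (-(s • g) - f) = μ • (-(s • g) - f)
      rw [mulVec_sub, mulVec_neg, mulVec_smul, hf, hg]
      module
  · refine Fin.forall_fin_succ.2 ⟨?_, Fin.forall_fin_two.2 ⟨?_, ?_⟩⟩
    · change (2 : ℝ) • f ⬝ᵥ (2 : ℝ) • f = 4 * (f ⬝ᵥ f)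
      simp only [dotProduct_smul, smul_dotProduct, smul_eq_mul]
      ring
    · change (s • g - f) ⬝ᵥ (s • g - f) = 4 * (f ⬝ᵥ f)
      simp only [dotProduct_sub, sub_dotProduct, dotProduct_smul, smul_dotProduct, smul_eq_mul, hfg,
        dotProduct_comm g f]
      linear_combination hs
    · change (-(s • g) - f) ⬝ᵥ (-(s • g) - f) = 4 * (f ⬝ᵥ f)
      simp only [dotProduct_sub, sub_dotProduct, dotProduct_neg, neg_dotProduct, dotProduct_smul,
        smul_dotProduct, smul_eq_mul, hfg, dotProduct_comm g f]
      linear_combination hs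
  · rw [Fin.sum_univ_three]
    change (2 : ℝ) • f + (s • g - f) + (-(s • g) - f) = 0
    module

theorem HasSpectralGap.eq_or_eq_neg (hgap : HasSpectralGap P γ) (hlt : 9 * (1 + μ) < γ)
    (hf : P *ᵥ f = μ • f) (hg : P *ᵥ g = μ • g) (hfg : f ⬝ᵥ f = g ⬝ᵥ g) : f = g ∨ f = -g := by
  by_contra! hne
  refine hlt.not_ge (hgap.le_of_dotProduct_eq_zero hsymm hP (f := f - g) (g := f + g) ?_ ?_
    (sub_ne_zero.2 hne.1) (mt add_eq_zero_iff_eq_neg.1 hne.2) ?_)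
  · rw [mulVec_sub, hf, hg, smul_sub]
  · rw [mulVec_add, hf, hg, smul_add]
  · rw [dotProduct_add, sub_dotProduct, sub_dotProduct, dotProduct_comm g f, hfg]
    ring

end Eigenvector

theorem two_mul_apply_le_of_abs_eq (hP : P ∈ rowStochastic ℝ V) {μ : ℝ} {f : V → ℝ}
    (hf : P *ᵥ f = μ • f) (habs : ∀ x y, |f x| = |f y|) {x y : V} (hxy : f x = f y)
    (hx : f x ≠ 0) : 2 * P x y ≤ 1 + μ := by
  have hterm_nonneg (z : V) : 0 ≤ P x z * (f x ^ 2 + f x * f z) := by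
    refine mul_nonneg (hP.1 x z) ?_
    rcases abs_eq_abs.1 (habs z x) with h | h <;> rw [h]
    · exact add_nonneg (sq_nonneg _) (mul_self_nonneg _)
    · linarith
  have hsum : ∑ z, P x z * (f x ^ 2 + f x * f z) = (1 + μ) * f x ^ 2 := by
    have heig : ∑ z, P x z * f z = μ * f x := congrFun hf x
    simp only [mul_add, Finset.sum_add_distrib, ← Finset.sum_mul, sum_row_of_mem_rowStochastic hP,
      mul_left_comm _ (f x), ← Finset.mul_sum, heig]
    ring
  refine le_of_mul_le_mul_right ?_ (pow_pos (abs_pos.2 hx) 2)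
  calc 2 * P x y * |f x| ^ 2 = P x y * (f x ^ 2 + f x * f y) := by rw [← hxy, sq_abs]; ring
    _ ≤ ∑ z, P x z * (f x ^ 2 + f x * f z) :=
        Finset.single_le_sum (fun z _ => hterm_nonneg z) (Finset.mem_univ y)
    _ = (1 + μ) * |f x| ^ 2 := by rw [hsum, sq_abs]

end Kernel

section Eigenvalues

variable {V : Type*} [Fintype V] [DecidableEq V] {A : Matrix V V ℝ}

theorem exists_mulVec_eq_smul_of_isRoot_charpoly {μ : ℝ} (hμ : A.charpoly.IsRoot μ) :
    ∃ f ≠ 0, A *ᵥ f = μ • f := by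
  rw [IsRoot, eval_charpoly] at hμ
  obtain ⟨f, hf_ne, hf⟩ := exists_mulVec_eq_zero_iff.2 hμ
  refine ⟨f, hf_ne, ?_⟩
  rw [sub_mulVec, sub_eq_zero] at hf
  rw [← hf, scalar_apply, ← smul_one_eq_diagonal, smul_mulVec, one_mulVec]

theorem eigenvalues₀_eq_of_charpoly_eq_s2 (hA : A.IsHermitian) {μs : Fin (Fintype.card V) → ℝ}
    (hanti : Antitone μs) (hchar : A.charpoly = ∏ i, (X - C (μs i))) :
    hA.eigenvalues₀ = μs := by
  have hroots := hA.roots_charpoly_eq_eigenvalues₀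
  rw [hchar, roots_prod _ _ (by simp [Finset.prod_ne_zero_iff, X_sub_C_ne_zero])] at hroots
  simp only [roots_X_sub_C, Multiset.bind_singleton, Fin.univ_val_map, Multiset.coe_eq_coe]
    at hroots
  exact List.ofFn_injective (List.Perm.eq_of_sortedGE hA.eigenvalues₀_antitone.sortedGE_ofFn
    hanti.sortedGE_ofFn hroots.symm)

theorem dotProduct_eq_sum_eigenvectorBasis (hA : A.IsHermitian) (v w : V → ℝ) :
    v ⬝ᵥ w = ∑ i, (⇑(hA.eigenvectorBasis i) ⬝ᵥ v) * (⇑(hA.eigenvectorBasis i) ⬝ᵥ w) := by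
  have hparseval := hA.eigenvectorBasis.sum_inner_mul_inner (WithLp.toLp 2 v) (WithLp.toLp 2 w)
  simpa [PiLp.inner_apply, dotProduct, mul_comm] using hparseval.symm

theorem eigenvectorBasis_dotProduct_mulVec (hA : A.IsHermitian) (i : V) (v : V → ℝ) :
    ⇑(hA.eigenvectorBasis i) ⬝ᵥ A *ᵥ v = hA.eigenvalues i * (⇑(hA.eigenvectorBasis i) ⬝ᵥ v) := by
  rw [dotProduct_mulVec, ← mulVec_transpose, isHermitian_iff_isSymm.1 hA,
    hA.mulVec_eigenvectorBasis, smul_dotProduct, smul_eq_mul]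

theorem dotProduct_mulVec_le_of_eigenvalues_le (hA : A.IsHermitian) {m : ℝ} {i₀ : V}
    (hm : ∀ i ≠ i₀, hA.eigenvalues i ≤ m) {v : V → ℝ}
    (hv : ⇑(hA.eigenvectorBasis i₀) ⬝ᵥ v = 0) : v ⬝ᵥ A *ᵥ v ≤ m * (v ⬝ᵥ v) := by
  rw [dotProduct_eq_sum_eigenvectorBasis hA, dotProduct_eq_sum_eigenvectorBasis hA v v,
    Finset.mul_sum]
  refine Finset.sum_le_sum fun i _ => ?_
  rw [eigenvectorBasis_dotProduct_mulVec]
  rcases eq_or_ne i i₀ with rfl | hi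
  · simp only [hv, mul_zero, le_refl]
  · linarith [mul_le_mul_of_nonneg_right (hm i hi) (mul_self_nonneg (hA.eigenvectorBasis i ⬝ᵥ v))]

theorem hasSpectralGap_of_eigenvalues_le (hA : A.IsHermitian) (hP : A ∈ rowStochastic ℝ V)
    {m : ℝ} {i₀ : V} (hm : ∀ i ≠ i₀, hA.eigenvalues i ≤ m) : HasSpectralGap A (1 - m) := by
  intro v hv
  have hsymm : A.IsSymm := isHermitian_iff_isSymm.1 hA
  suffices h : v ⬝ᵥ A *ᵥ v ≤ m * (v ⬝ᵥ v) by linarith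
  rcases le_or_gt 1 m with hm_one | hm_one
  · exact (dotProduct_mulVec_le_self hsymm hP v).trans
      (le_mul_of_one_le_left (dotProduct_star_self_nonneg v) hm_one)
  -- The plane spanned by `v` and `1` contains a vector orthogonal to the eigenvector of index `i₀`,
  -- and `v` and `1` diagonalize the quadratic form on that plane.
  set b := ⇑(hA.eigenvectorBasis i₀)
  have hone_pos : (0 : ℝ) < (1 : V → ℝ) ⬝ᵥ 1 :=
    dotProduct_self_pos_of_ne_zero (Function.ne_iff.2 ⟨i₀, one_ne_zero⟩)
  have hb : b ⬝ᵥ 1 ≠ 0 := by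
    intro hb
    have hle := dotProduct_mulVec_le_of_eigenvalues_le hA hm hb
    rw [hP.2] at hle
    exact hm_one.not_ge (le_of_mul_le_mul_right (by rwa [one_mul]) hone_pos)
  have hle := dotProduct_mulVec_le_of_eigenvalues_le hA hm
    (v := (b ⬝ᵥ v) • (1 : V → ℝ) - (b ⬝ᵥ 1) • v) (by
      simp only [dotProduct_sub, dotProduct_smul, smul_eq_mul]
      ring)
  simp only [mulVec_sub, mulVec_smul, hP.2, dotProduct_sub, sub_dotProduct, smul_dotProduct,
    dotProduct_smul, smul_eq_mul, dotProduct_comm v 1, hv,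
    one_dotProduct_mulVec hsymm hP.2] at hle
  refine le_of_mul_le_mul_left ?_ (pow_pos (abs_pos.2 hb) 2)
  rw [sq_abs]
  linarith [mul_nonneg (mul_nonneg (sq_nonneg (b ⬝ᵥ v)) hone_pos.le) (sub_nonneg.2 hm_one.le)]

theorem hasSpectralGap_of_charpoly_eq (hsymm : A.IsSymm) (hP : A ∈ rowStochastic ℝ V)
    (hV : 2 ≤ Fintype.card V) {μs : Fin (Fintype.card V) → ℝ} (hanti : Antitone μs)
    (hchar : A.charpoly = ∏ i, (X - C (μs i))) : HasSpectralGap A (1 - μs ⟨1, hV⟩) := by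
  have hA : A.IsHermitian := isHermitian_iff_isSymm.2 hsymm
  let e : Fin (Fintype.card V) ≃ V := Fintype.equivOfCardEq (Fintype.card_fin _)
  refine hasSpectralGap_of_eigenvalues_le hA hP (i₀ := e ⟨0, zero_lt_two.trans_le hV⟩)
    fun i hi => ?_
  have hi_pos : (e.symm i : ℕ) ≠ 0 := fun h => hi (e.symm_apply_eq.1 (Fin.ext h))
  calc hA.eigenvalues i = μs (e.symm i) := by
        rw [← eigenvalues₀_eq_of_charpoly_eq_s2 hA hanti hchar]
        rfl
    _ ≤ μs ⟨1, hV⟩ := hanti (Fin.mk_le_of_le_val (Nat.one_le_iff_ne_zero.2 hi_pos))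

end Eigenvalues

section Graph

variable {V : Type*} [Fintype V] {G : SimpleGraph V} {d : ℕ}

theorem normAdj_isSymm (hreg : G.IsRegularOfDegree d) : (normAdj G).IsSymm := by
  ext x y
  simp only [normAdj, transpose_apply, of_apply, hreg.degree_eq, G.adj_comm]

theorem normAdj_mem_rowStochastic [DecidableEq V] (hdeg : ∀ x, 0 < G.degree x) :
    normAdj G ∈ rowStochastic ℝ V := by
  refine mem_rowStochastic_iff_sum.2 ⟨fun x y => ?_, fun x => ?_⟩
  · simp only [normAdj, of_apply]
    positivity
  · have hx : (G.degree x : ℝ) ≠ 0 := Nat.cast_ne_zero.2 (hdeg x).ne'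
    simp only [normAdj, of_apply, ← Finset.sum_filter, Finset.sum_const, nsmul_eq_mul]
    rw [← SimpleGraph.neighborFinset_eq_filter, SimpleGraph.card_neighborFinset_eq_degree,
      mul_inv_cancel₀ hx]

theorem normAdj_mulVec_comp (φ : G ≃g G) (f : V → ℝ) :
    normAdj G *ᵥ (f ∘ φ) = (normAdj G *ᵥ f) ∘ φ := by
  ext x
  simp only [mulVec, dotProduct, Function.comp_apply]
  rw [← Equiv.sum_comp φ.toEquiv fun y => normAdj G (φ x) y * f y]
  refine Finset.sum_congr rfl fun y _ => ?_
  have hdeg : G.degree (φ x) = G.degree x := φ.degree_eq x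
  simp [normAdj, hdeg, φ.map_adj_iff]

theorem exists_adj_eq_of_not_colorable_two {V : Type*} {G : SimpleGraph V}
    (hnonbip : ¬ G.Colorable 2) {f : V → ℝ} (habs : ∀ x y, |f x| = |f y|) :
    ∃ x y, G.Adj x y ∧ f x = f y := by
  by_contra! hne
  let sign : G.Coloring Bool := SimpleGraph.Coloring.mk (fun x => decide (0 < f x)) (by
    intro x y hxy
    have hopp := (abs_eq_abs.1 (habs x y)).resolve_left (hne x y hxy)
    grind)
  exact hnonbip sign.colorable

theorem degree_pos_of_not_colorable_two (hreg : G.IsRegularOfDegree d)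
    (hnonbip : ¬ G.Colorable 2) (x : V) : 0 < G.degree x := by
  obtain ⟨y, z, hyz, -⟩ := exists_adj_eq_of_not_colorable_two hnonbip (f := 0) fun _ _ => rfl
  rw [hreg.degree_eq x, ← hreg.degree_eq y]
  exact (G.degree_pos_iff_exists_adj y).2 ⟨z, hyz⟩

theorem two_div_le_of_abs_eq (hreg : G.IsRegularOfDegree d) (hnonbip : ¬ G.Colorable 2) {μ : ℝ}
    {f : V → ℝ} (hf : normAdj G *ᵥ f = μ • f) (hf_ne : f ≠ 0) (habs : ∀ x y, |f x| = |f y|) :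
    2 / (d : ℝ) ≤ 1 + μ := by
  obtain ⟨x, y, hadj, hxy⟩ := exists_adj_eq_of_not_colorable_two hnonbip habs
  have hx : f x ≠ 0 := by
    obtain ⟨z, hz⟩ := Function.ne_iff.1 hf_ne
    exact abs_pos.1 (habs z x ▸ abs_pos.2 hz)
  have hP := normAdj_mem_rowStochastic (degree_pos_of_not_colorable_two hreg hnonbip)
  calc 2 / (d : ℝ) = 2 * normAdj G x y := by
        simp [normAdj, hadj, hreg.degree_eq, div_eq_mul_inv]
    _ ≤ 1 + μ := two_mul_apply_le_of_abs_eq hP hf habs hxy hx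

theorem VertexTransitive.abs_eq_of_lt [DecidableEq V] (hvt : VertexTransitive G)
    (hsymm : (normAdj G).IsSymm) (hP : normAdj G ∈ rowStochastic ℝ V) {γ μ : ℝ}
    (hgap : HasSpectralGap (normAdj G) γ) (hlt : 9 * (1 + μ) < γ) {f : V → ℝ}
    (hf : normAdj G *ᵥ f = μ • f) (x y : V) : |f x| = |f y| := by
  obtain ⟨φ, rfl⟩ := hvt x y
  have hfφ : normAdj G *ᵥ (f ∘ φ) = μ • (f ∘ φ) := by
    rw [normAdj_mulVec_comp, hf]
    rfl
  have hnorm : f ⬝ᵥ f = (f ∘ φ) ⬝ᵥ (f ∘ φ) :=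
    (Equiv.sum_comp φ.toEquiv fun z => f z * f z).symm
  refine abs_eq_abs.2 ?_
  exact (hgap.eq_or_eq_neg hsymm hP hlt hf hfφ hnorm).imp (congrFun · x) (congrFun · x)

end Graph

theorem two_mul_sqrt_sub_one_sq_le {γ : ℝ} (hγ : 0 ≤ γ) (hγ_le : γ ≤ 2) :
    2 * (√(1 + γ / 4) - 1) ^ 2 ≤ γ / 9 := by
  have hle : √(1 + γ / 4) - 1 ≤ γ / 8 := by
    linarith [Real.sqrt_one_add_le (show -1 ≤ γ / 4 by linarith)]
  have hnonneg : 0 ≤ √(1 + γ / 4) - 1 := sub_nonneg.2 (Real.one_le_sqrt.2 (by linarith))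
  calc 2 * (√(1 + γ / 4) - 1) ^ 2 ≤ 2 * (γ / 8) ^ 2 := by gcongr
    _ ≤ γ / 9 := by nlinarith

theorem one_add_smallest_ge_min_spectralGap_general {V : Type*} [Fintype V] (G : SimpleGraph V)
    (hn : 2 ≤ Fintype.card V) (hnonbip : ¬ G.Colorable 2) (hvt : VertexTransitive G) (d : ℕ)
    (hreg : G.IsRegularOfDegree d) (μs : Fin (Fintype.card V) → ℝ) (hanti : Antitone μs)
    (hchar : (normAdj G).charpoly = ∏ i, (X - C (μs i))) (i : Fin (Fintype.card V)) :
    1 + μs i ≥ min (2 / (d : ℝ)) ((1 - μs ⟨1, hn⟩) / 9) := by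
  have hsymm := normAdj_isSymm hreg
  have hP := normAdj_mem_rowStochastic (degree_pos_of_not_colorable_two hreg hnonbip)
  have hgap := hasSpectralGap_of_charpoly_eq hsymm hP hn hanti hchar
  have hroot : (normAdj G).charpoly.IsRoot (μs i) := by
    rw [hchar, isRoot_prod]
    exact ⟨i, Finset.mem_univ i, root_X_sub_C.2 rfl⟩
  obtain ⟨f, hf_ne, hf⟩ := exists_mulVec_eq_smul_of_isRoot_charpoly hroot
  rcases le_or_gt (1 - μs ⟨1, hn⟩) (9 * (1 + μs i)) with hle | hlt
  · exact min_le_of_right_le (by linarith)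
  · exact min_le_of_left_le (two_div_le_of_abs_eq hreg hnonbip hf hf_ne
      (hvt.abs_eq_of_lt hsymm hP hgap hlt hf))

/-- **Corollary 1, second estimate**: for a finite, connected, non-bipartite,
vertex-transitive graph of degree `d` with normalized adjacency eigenvalues
`μs (n-1) = μₙ ≤ ⋯ ≤ μs 1 = μ₂ ≤ μs 0 = μ₁ = 1` (listed with multiplicity, in
decreasing order, as the roots of the characteristic polynomial of `D⁻¹A`), one has
`1 + μₙ ≥ min {2/d, 2(√(1 + (1-μ₂)/4) - 1)²}`. Non-bipartiteness is expressed as the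
non-existence of a proper 2-coloring. -/
theorem one_add_smallest_ge_min_spectralGap {V : Type*} [Fintype V] (G : SimpleGraph V)
    (hconn : G.Connected) (hn : 2 ≤ Fintype.card V)
    (hnonbip : ¬ G.Colorable 2)
    (hvt : VertexTransitive G)
    (d : ℕ) (hreg : G.IsRegularOfDegree d)
    (μs : Fin (Fintype.card V) → ℝ) (hanti : Antitone μs)
    (hchar : (normAdj G).charpoly = ∏ i, (X - C (μs i)))
    (hμ1 : μs ⟨0, by omega⟩ = 1) :
    1 + μs ⟨Fintype.card V - 1, by omega⟩ ≥
      min (2 / (d : ℝ))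
        (2 * (Real.sqrt (1 + (1 - μs ⟨1, by omega⟩) / 4) - 1) ^ 2) := by
  have hmin := one_add_smallest_ge_min_spectralGap_general G hn hnonbip hvt d hreg μs hanti hchar
  have hle_one : μs ⟨1, hn⟩ ≤ 1 := hμ1 ▸ hanti (Fin.mk_le_mk.2 zero_le_one)
  have hone_add_nonneg : 0 ≤ 1 + μs ⟨1, hn⟩ :=
    (le_min (by positivity) (by linarith)).trans (hmin ⟨1, hn⟩)
  exact (min_le_min_left _ (two_mul_sqrt_sub_one_sq_le (by linarith) (by linarith))).trans (hmin _)

end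
end

section
/- Let G=(V,E) be a finite connected graph with second-largest normalized adjacency eigenvalue μ_2, and let f, g be eigenfunctions of D^{-1}A with eigenvalues μ and ν respectively, normalized so that ‖f‖₂ = ‖g‖₂ = 1, and with (1+μ)/(1−μ_2) ≤ 1 and (1+ν)/(1−μ_2) ≤ 1. Then ⟨|f|, |g|⟩ ≥ √(1 − (1+μ)/(1−μ_2)) · √(1 − (1+ν)/(1−μ_2)) − √((1+μ)/(1−μ_2)) · √((1+ν)/(1−μ_2)). -/
open Finset Polynomial

noncomputable section
open scoped Classical

/-- The degree-weighted inner product `⟨f,g⟩ = ∑ u, f u * g u * d_u`. -/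
def dInner {V : Type*} [Fintype V] (G : SimpleGraph V) (f g : V → ℝ) : ℝ :=
  ∑ u, f u * g u * (G.degree u : ℝ)

/-- The `ℓ²`-norm associated to the degree-weighted inner product. -/
def dNorm {V : Type*} [Fintype V] (G : SimpleGraph V) (f : V → ℝ) : ℝ :=
  Real.sqrt (dInner G f f)

/-!
On the Hilbert space `ℓ²(V, deg)` the operator `D⁻¹A` is symmetric, and connectedness makes `1` a
simple top eigenvalue with eigenvector the normalized constant function `φ`. If `f` has Rayleigh
quotient `μ`, then by the triangle inequality `|f|` has Rayleigh quotient at least `-μ`, and such a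
vector is close to `φ`: writing `μ₂` for the second eigenvalue,
`1 - ⟨φ, |f|⟩² ≤ (1 + μ) / (1 - μ₂)`. So `|f|` and `|g|` are both close to the same unit vector `φ`,
hence to each other: Cauchy–Schwarz for their components orthogonal to `φ` is the bound
`cos (α + β) ≤ ⟨|f|, |g|⟩` in terms of their angles `α`, `β` to `φ`.
-/

theorem eq_of_antitone_of_prod_X_sub_C_eq {R : Type*} [CommRing R] [IsDomain R] [PartialOrder R]
    {n : ℕ} {a b : Fin n → R} (ha : Antitone a) (hb : Antitone b)
    (h : ∏ i, (X - C (a i)) = ∏ i, (X - C (b i))) : a = b := by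
  have hroots (c : Fin n → R) : (∏ i, (X - C (c i))).roots = univ.val.map c := by
    rw [← roots_multiset_prod_X_sub_C (univ.val.map c), Multiset.map_map]
    rfl
  have hperm := (hroots a).symm.trans ((congrArg roots h).trans (hroots b))
  rw [Fin.univ_val_map, Fin.univ_val_map, Multiset.coe_eq_coe] at hperm
  exact List.ofFn_injective (hperm.eq_of_sortedGE ha.sortedGE_ofFn hb.sortedGE_ofFn)

section SymmetricOperators

open Module
open scoped RealInnerProductSpace

variable {E : Type*} [NormedAddCommGroup E] [InnerProductSpace ℝ E]

theorem norm_sub_inner_smul_sq {e : E} (he : ‖e‖ = 1) (x : E) :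
    ‖x - ⟪e, x⟫ • e‖ ^ 2 = ‖x‖ ^ 2 - ⟪e, x⟫ ^ 2 := by
  rw [norm_sub_sq_real, norm_smul, he, real_inner_smul_right, real_inner_comm, mul_one,
    Real.norm_eq_abs, sq_abs]
  ring

theorem inner_mul_inner_sub_sqrt_mul_sqrt_le_inner {e : E} (he : ‖e‖ = 1) (x y : E) :
    ⟪e, x⟫ * ⟪e, y⟫ - √(‖x‖ ^ 2 - ⟪e, x⟫ ^ 2) * √(‖y‖ ^ 2 - ⟪e, y⟫ ^ 2) ≤ ⟪x, y⟫ := by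
  have hperp : ⟪x - ⟪e, x⟫ • e, y - ⟪e, y⟫ • e⟫ = ⟪x, y⟫ - ⟪e, x⟫ * ⟪e, y⟫ := by
    simp only [inner_sub_left, inner_sub_right, real_inner_smul_left, real_inner_smul_right,
      real_inner_self_eq_norm_sq, he, real_inner_comm e x]
    ring
  have hcs := (abs_le.1 (abs_real_inner_le_norm (x - ⟪e, x⟫ • e) (y - ⟪e, y⟫ • e))).1
  rw [← norm_sub_inner_smul_sq he, ← norm_sub_inner_smul_sq he, Real.sqrt_sq (norm_nonneg _),
    Real.sqrt_sq (norm_nonneg _)]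
  linarith

variable [FiniteDimensional ℝ E] {T : E →ₗ[ℝ] E} {n : ℕ} {c : ℝ}

theorem eigenvalues_eq_of_charpoly_eq (hT : T.IsSymmetric) (hn : finrank ℝ E = n)
    {a : Fin n → ℝ} (ha : Antitone a) (h : T.charpoly = ∏ i, (X - C (a i))) :
    hT.eigenvalues hn = a :=
  eq_of_antitone_of_prod_X_sub_C_eq (hT.eigenvalues_antitone hn) ha
    ((hT.charpoly_eq hn).symm.trans h)

theorem inner_apply_self_eq_sum_eigenvalues (hT : T.IsSymmetric) (hn : finrank ℝ E = n) (x : E) :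
    ⟪x, T x⟫ = ∑ i, hT.eigenvalues hn i * ⟪hT.eigenvectorBasis hn i, x⟫ ^ 2 := by
  rw [← (hT.eigenvectorBasis hn).sum_inner_mul_inner x (T x)]
  refine sum_congr rfl fun i _ => ?_
  rw [← hT, hT.apply_eigenvectorBasis, RCLike.ofReal_real_eq_id, id, real_inner_smul_left,
    real_inner_comm x]
  ring

theorem inner_apply_self_le_of_eigenvalues_le (hT : T.IsSymmetric) (hn : finrank ℝ E = n)
    {i : Fin n} {m : ℝ} (hm : ∀ j ≠ i, hT.eigenvalues hn j ≤ m) (x : E) :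
    ⟪x, T x⟫ ≤ hT.eigenvalues hn i * ⟪hT.eigenvectorBasis hn i, x⟫ ^ 2 +
      m * (‖x‖ ^ 2 - ⟪hT.eigenvectorBasis hn i, x⟫ ^ 2) := by
  rw [inner_apply_self_eq_sum_eigenvalues hT hn, ← (hT.eigenvectorBasis hn).sum_sq_inner_right x,
    ← add_sum_erase _ _ (mem_univ i), ← add_sum_erase univ (fun j => ⟪_, x⟫ ^ 2) (mem_univ i),
    add_sub_cancel_left, mul_sum]
  gcongr with j hj
  exact hm j (ne_of_mem_erase hj)

theorem eigenvalues_le_of_inner_apply_self_le (hT : T.IsSymmetric) (hn : finrank ℝ E = n)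
    (hc : ∀ x, ⟪x, T x⟫ ≤ c * ‖x‖ ^ 2) (i : Fin n) : hT.eigenvalues hn i ≤ c := by
  simpa [real_inner_smul_right] using hc (hT.eigenvectorBasis hn i)

section SimpleTop

variable (hT : T.IsSymmetric) (hn : finrank ℝ E = n) (hc : ∀ x, ⟪x, T x⟫ ≤ c * ‖x‖ ^ 2)
  (hsimple : finrank ℝ (End.eigenspace T c) = 1)
include hc hsimple

theorem eigenvalues_zero_eq_of_finrank_eigenspace_eq_one (h0 : 0 < n) :
    hT.eigenvalues hn ⟨0, h0⟩ = c := by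
  have hev : End.HasEigenvalue T c := fun h => by
    rw [End.eigenspace, h, finrank_bot] at hsimple
    exact zero_ne_one hsimple
  obtain ⟨i, hi⟩ := hT.exists_eigenvalues_eq hn hev
  refine (eigenvalues_le_of_inner_apply_self_le hT hn hc _).antisymm ?_
  calc c = hT.eigenvalues hn i := hi.symm
    _ ≤ hT.eigenvalues hn ⟨0, h0⟩ := hT.eigenvalues_antitone hn (Fin.le_def.2 (Nat.zero_le _))

theorem eigenvalues_one_lt_of_finrank_eigenspace_eq_one (h1 : 1 < n) :
    hT.eigenvalues hn ⟨1, h1⟩ < c := by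
  refine (eigenvalues_le_of_inner_apply_self_le hT hn hc _).lt_of_ne fun h => ?_
  have hcard := (hT.card_filter_eigenvalues_eq hn c).trans hsimple
  have h0 := eigenvalues_zero_eq_of_finrank_eigenspace_eq_one hT hn hc hsimple (by omega)
  have := card_le_one.1 hcard.le ⟨0, by omega⟩ (by simpa using h0) ⟨1, h1⟩ (by simpa using h)
  simp at this

theorem inner_apply_self_le_of_finrank_eigenspace_eq_one (h1 : 1 < n) {e : E} (he : ‖e‖ = 1)
    (hTe : T e = c • e) (x : E) :
    ⟪x, T x⟫ ≤ c * ⟪e, x⟫ ^ 2 + hT.eigenvalues hn ⟨1, h1⟩ * (‖x‖ ^ 2 - ⟪e, x⟫ ^ 2) := by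
  let b := hT.eigenvectorBasis hn
  set i₀ : Fin n := ⟨0, by omega⟩
  have h0 : hT.eigenvalues hn i₀ = c :=
    eigenvalues_zero_eq_of_finrank_eigenspace_eq_one hT hn hc hsimple _
  have hb : b i₀ ∈ End.eigenspace T c := h0 ▸ (hT.hasEigenvector_eigenvectorBasis hn i₀).1
  have he0 : (⟨e, End.mem_eigenspace_iff.2 hTe⟩ : End.eigenspace T c) ≠ 0 := by
    simpa [Subtype.ext_iff] using norm_ne_zero_iff.1 (he.trans_ne one_ne_zero)
  obtain ⟨a, ha⟩ := (finrank_eq_one_iff_of_nonzero' _ he0).1 hsimple ⟨b i₀, hb⟩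
  replace ha : a • e = b i₀ := congrArg Subtype.val ha
  have hsq : ⟪b i₀, x⟫ ^ 2 = ⟪e, x⟫ ^ 2 := by
    have ha1 : |a| = 1 := by simpa [norm_smul, he] using congrArg norm ha
    rw [← ha, real_inner_smul_left, mul_pow, ← sq_abs a, ha1, one_pow, one_mul]
  have hle (j : Fin n) (hj : j ≠ i₀) : hT.eigenvalues hn j ≤ hT.eigenvalues hn ⟨1, h1⟩ :=
    hT.eigenvalues_antitone hn (Fin.le_def.2 (Nat.one_le_iff_ne_zero.2 (Fin.val_ne_of_ne hj)))
  rw [← hsq, ← h0]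
  exact inner_apply_self_le_of_eigenvalues_le hT hn hle x

end SimpleTop

end SymmetricOperators

section NormAdj

open Matrix

variable {V : Type*} [Fintype V] {G : SimpleGraph V}

theorem degMatrix_mul_normAdj : G.degMatrix ℝ * normAdj G = G.adjMatrix ℝ := by
  ext u v
  rw [SimpleGraph.degMatrix, diagonal_mul, normAdj, of_apply, SimpleGraph.adjMatrix_apply]
  split_ifs with h
  · exact mul_inv_cancel₀ (Nat.cast_ne_zero.2 h.degree_pos_left.ne')
  · rw [mul_zero]

theorem dInner_smul_right (c : ℝ) (f g : V → ℝ) : dInner G f (c • g) = c * dInner G f g := by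
  simp only [dInner, mul_sum, Pi.smul_apply, smul_eq_mul, mul_assoc, mul_left_comm c]

theorem dInner_eq_dotProduct (f g : V → ℝ) : dInner G f g = f ⬝ᵥ (G.degMatrix ℝ *ᵥ g) := by
  simp only [dInner, dotProduct, SimpleGraph.degMatrix_mulVec_apply, mul_assoc, mul_comm]

theorem dInner_comm (f g : V → ℝ) : dInner G f g = dInner G g f := by
  simp only [dInner, mul_comm (f _)]

theorem dInner_normAdj_mulVec (f g : V → ℝ) :
    dInner G f (normAdj G *ᵥ g) = f ⬝ᵥ (G.adjMatrix ℝ *ᵥ g) := by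
  rw [dInner_eq_dotProduct, mulVec_mulVec, degMatrix_mul_normAdj]

theorem dInner_normAdj_mulVec_self_eq_of_mulVec_eq_smul {f : V → ℝ} {c : ℝ}
    (hf : dNorm G f = 1) (hfe : normAdj G *ᵥ f = c • f) :
    dInner G f (normAdj G *ᵥ f) = c := by
  rw [hfe, dInner_smul_right, Real.sqrt_eq_one.1 hf, mul_one]

theorem dInner_abs_abs (f : V → ℝ) : dInner G |f| |f| = dInner G f f := by
  simp only [dInner, Pi.abs_apply, abs_mul_abs_self]

theorem dInner_sub_dInner_normAdj_mulVec (f : V → ℝ) :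
    dInner G f f - dInner G f (normAdj G *ᵥ f) = f ⬝ᵥ (G.lapMatrix ℝ *ᵥ f) := by
  rw [dInner_eq_dotProduct, dInner_normAdj_mulVec, SimpleGraph.lapMatrix, sub_mulVec,
    dotProduct_sub]

theorem dInner_normAdj_mulVec_self_le (f : V → ℝ) :
    dInner G f (normAdj G *ᵥ f) ≤ dInner G f f := by
  rw [← sub_nonneg, dInner_sub_dInner_normAdj_mulVec]
  exact (G.posSemidef_lapMatrix ℝ).dotProduct_mulVec_nonneg f

theorem neg_dInner_normAdj_mulVec_le_abs (f : V → ℝ) :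
    -dInner G f (normAdj G *ᵥ f) ≤ dInner G |f| (normAdj G *ᵥ |f|) := by
  simp only [dInner_normAdj_mulVec, SimpleGraph.dotProduct_mulVec_adjMatrix, ← sum_neg_distrib]
  gcongr with u _ v _
  split_ifs
  · exact (neg_le_abs _).trans_eq (abs_mul _ _)
  · exact neg_zero.le

theorem lapMatrix_mulVec_eq_zero_of_normAdj_mulVec_eq_self {f : V → ℝ}
    (hf : normAdj G *ᵥ f = f) : G.lapMatrix ℝ *ᵥ f = 0 := by
  rw [SimpleGraph.lapMatrix, sub_mulVec, ← degMatrix_mul_normAdj, ← mulVec_mulVec, hf, sub_self]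

theorem eq_smul_one_of_normAdj_mulVec_eq_self (hconn : G.Connected) {f : V → ℝ}
    (hf : normAdj G *ᵥ f = f) (v : V) : f = f v • 1 := by
  ext u
  simpa using (G.lapMatrix_mulVec_eq_zero_iff_forall_reachable).1
    (lapMatrix_mulVec_eq_zero_of_normAdj_mulVec_eq_self hf) u v (hconn.preconnected u v)

theorem normAdj_mulVec_one (hdeg : ∀ u, 0 < G.degree u) : normAdj G *ᵥ 1 = 1 := by
  ext u
  have h : G.degree u * (normAdj G *ᵥ 1) u = (G.degree u : ℝ) := by
    rw [← SimpleGraph.degMatrix_mulVec_apply, mulVec_mulVec, degMatrix_mul_normAdj]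
    simp [SimpleGraph.adjMatrix_mulVec_apply]
  exact (mul_eq_left₀ (Nat.cast_ne_zero.2 (hdeg u).ne')).1 h

theorem dInner_normAdj_mulVec_comm (f g : V → ℝ) :
    dInner G (normAdj G *ᵥ f) g = dInner G f (normAdj G *ᵥ g) := by
  rw [dInner_comm, dInner_normAdj_mulVec, dInner_normAdj_mulVec, dotProduct_mulVec,
    ← mulVec_transpose, SimpleGraph.transpose_adjMatrix, dotProduct_comm]

end NormAdj

section DegreeL2

open Matrix Module
open scoped RealInnerProductSpace

variable {V : Type*} [Fintype V] {G : SimpleGraph V}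

/-- The Hilbert space `ℓ²(V, deg)`: functions on `V` with inner product `dInner G`, which is
definite because all degrees are positive. A type synonym, since `V → ℝ` already carries the sup
norm. -/
def DegreeL2 (_hdeg : ∀ u, 0 < G.degree u) : Type _ := V → ℝ

variable (hdeg : ∀ u, 0 < G.degree u)

include hdeg in
theorem posDef_degMatrix : (G.degMatrix ℝ).PosDef :=
  .diagonal fun u => Nat.cast_pos.2 (hdeg u)

namespace DegreeL2

instance : NormedAddCommGroup (DegreeL2 hdeg) :=
  (G.degMatrix ℝ).toNormedAddCommGroup (posDef_degMatrix hdeg)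

instance : InnerProductSpace ℝ (DegreeL2 hdeg) :=
  (G.degMatrix ℝ).toInnerProductSpace (posDef_degMatrix hdeg).posSemidef

/-- A function on `V`, seen as an element of `ℓ²(V, deg)`. -/
def ofFun : (V → ℝ) ≃ₗ[ℝ] DegreeL2 hdeg := LinearEquiv.refl ℝ (V → ℝ)

instance : FiniteDimensional ℝ (DegreeL2 hdeg) :=
  (ofFun hdeg).finiteDimensional

theorem finrank_eq_card : finrank ℝ (DegreeL2 hdeg) = Fintype.card V :=
  (ofFun hdeg).finrank_eq.symm.trans (finrank_fintype_fun_eq_card ℝ)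

theorem inner_ofFun (f g : V → ℝ) : ⟪ofFun hdeg f, ofFun hdeg g⟫ = dInner G f g := by
  rw [dInner_eq_dotProduct, dotProduct_comm]
  rfl

theorem norm_ofFun_sq (f : V → ℝ) : ‖ofFun hdeg f‖ ^ 2 = dInner G f f := by
  rw [← inner_ofFun hdeg, real_inner_self_eq_norm_sq]

theorem norm_ofFun (f : V → ℝ) : ‖ofFun hdeg f‖ = dNorm G f := by
  rw [dNorm, ← norm_ofFun_sq hdeg, Real.sqrt_sq (norm_nonneg _)]

/-- The operator `D⁻¹A` on `ℓ²(V, deg)`, where it is symmetric. -/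
def normAdjEnd : End ℝ (DegreeL2 hdeg) := (ofFun hdeg).conj (toLin' (normAdj G))

theorem normAdjEnd_ofFun (f : V → ℝ) :
    normAdjEnd hdeg (ofFun hdeg f) = ofFun hdeg (normAdj G *ᵥ f) := by
  rw [normAdjEnd, LinearEquiv.conj_apply_apply, LinearEquiv.symm_apply_apply, toLin'_apply]

theorem charpoly_normAdjEnd : (normAdjEnd hdeg).charpoly = (normAdj G).charpoly := by
  rw [normAdjEnd, LinearEquiv.charpoly_conj, charpoly_toLin']

theorem isSymmetric_normAdjEnd : (normAdjEnd hdeg).IsSymmetric := by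
  refine (ofFun hdeg).surjective.forall₂.2 fun f g => ?_
  simp only [normAdjEnd_ofFun, inner_ofFun, dInner_normAdj_mulVec_comm]

theorem inner_normAdjEnd_self_le (x : DegreeL2 hdeg) :
    ⟪x, normAdjEnd hdeg x⟫ ≤ 1 * ‖x‖ ^ 2 := by
  obtain ⟨f, rfl⟩ := (ofFun hdeg).surjective x
  rw [one_mul, norm_ofFun_sq, normAdjEnd_ofFun, inner_ofFun]
  exact dInner_normAdj_mulVec_self_le f

theorem ofFun_mem_eigenspace_one_iff {f : V → ℝ} :
    ofFun hdeg f ∈ End.eigenspace (normAdjEnd hdeg) 1 ↔ normAdj G *ᵥ f = f := by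
  rw [End.mem_eigenspace_iff, one_smul, normAdjEnd_ofFun, (ofFun hdeg).injective.eq_iff]

theorem finrank_eigenspace_normAdjEnd_one (hconn : G.Connected) :
    finrank ℝ (End.eigenspace (normAdjEnd hdeg) 1) = 1 := by
  obtain ⟨v⟩ := hconn.nonempty
  have : Nonempty V := ⟨v⟩
  have hone : ofFun hdeg 1 ∈ End.eigenspace (normAdjEnd hdeg) 1 :=
    (ofFun_mem_eigenspace_one_iff hdeg).2 (normAdj_mulVec_one hdeg)
  refine finrank_eq_one ⟨_, hone⟩ (by simp [Subtype.ext_iff]) ?_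
  rintro ⟨x, hx⟩
  obtain ⟨f, rfl⟩ := (ofFun hdeg).surjective x
  have hconst := eq_smul_one_of_normAdj_mulVec_eq_self hconn
    ((ofFun_mem_eigenspace_one_iff hdeg).1 hx) v
  exact ⟨f v, Subtype.ext (by rw [Submodule.coe_smul, ← map_smul, ← hconst])⟩

end DegreeL2

include hdeg in
theorem dInner_mul_dInner_sub_sqrt_mul_sqrt_le_dInner {e : V → ℝ} (he : dNorm G e = 1)
    (f g : V → ℝ) :
    dInner G e f * dInner G e g -
      √(dInner G f f - dInner G e f ^ 2) * √(dInner G g g - dInner G e g ^ 2) ≤ dInner G f g := by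
  simpa only [DegreeL2.inner_ofFun, DegreeL2.norm_ofFun_sq] using
    inner_mul_inner_sub_sqrt_mul_sqrt_le_inner ((DegreeL2.norm_ofFun hdeg e).trans he)
      (DegreeL2.ofFun hdeg f) (DegreeL2.ofFun hdeg g)

end DegreeL2

section SpectralGap

open Matrix

variable {V : Type*} [Fintype V] {G : SimpleGraph V}

/-- The nonnegative constant function of norm one: on a connected graph, the top (Perron)
eigenfunction of `D⁻¹A`. -/
def perronFun (G : SimpleGraph V) : V → ℝ := (dNorm G 1)⁻¹ • 1

theorem dNorm_perronFun [Nonempty V] (hdeg : ∀ u, 0 < G.degree u) : dNorm G (perronFun G) = 1 := by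
  rw [← DegreeL2.norm_ofFun hdeg, perronFun, ← DegreeL2.norm_ofFun hdeg, map_smul]
  exact norm_smul_inv_norm (𝕜 := ℝ) ((DegreeL2.ofFun hdeg).map_ne_zero_iff.2 one_ne_zero)

theorem normAdj_mulVec_perronFun (hdeg : ∀ u, 0 < G.degree u) :
    normAdj G *ᵥ perronFun G = perronFun G := by
  rw [perronFun, mulVec_smul, normAdj_mulVec_one hdeg]

theorem dInner_perronFun_nonneg {f : V → ℝ} (hf : 0 ≤ f) : 0 ≤ dInner G (perronFun G) f :=
  sum_nonneg fun u _ => mul_nonneg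
    (mul_nonneg (mul_nonneg (inv_nonneg.2 (Real.sqrt_nonneg _)) zero_le_one) (hf u))
    (Nat.cast_nonneg _)

theorem degree_pos_of_connected (hconn : G.Connected) (hn : 1 < Fintype.card V) (u : V) :
    0 < G.degree u :=
  have := Fintype.one_lt_card_iff_nontrivial.1 hn
  hconn.preconnected.degree_pos_of_nontrivial u

variable (hconn : G.Connected) (hn : 1 < Fintype.card V) {μs : Fin (Fintype.card V) → ℝ}
  (hanti : Antitone μs) (hchar : (normAdj G).charpoly = ∏ i, (X - C (μs i)))
include hconn hanti hchar

theorem second_eigenvalue_lt_one : μs ⟨1, hn⟩ < 1 := by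
  have hdeg := degree_pos_of_connected hconn hn
  have hT := DegreeL2.isSymmetric_normAdjEnd hdeg
  have hcard := DegreeL2.finrank_eq_card hdeg
  rw [← eigenvalues_eq_of_charpoly_eq hT hcard hanti
    ((DegreeL2.charpoly_normAdjEnd hdeg).trans hchar)]
  exact eigenvalues_one_lt_of_finrank_eigenspace_eq_one hT hcard
    (DegreeL2.inner_normAdjEnd_self_le hdeg)
    (DegreeL2.finrank_eigenspace_normAdjEnd_one hdeg hconn) hn

theorem dInner_normAdj_mulVec_self_le_perronFun (f : V → ℝ) :
    dInner G f (normAdj G *ᵥ f) ≤ dInner G (perronFun G) f ^ 2 +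
      μs ⟨1, hn⟩ * (dInner G f f - dInner G (perronFun G) f ^ 2) := by
  have := hconn.nonempty
  have hdeg := degree_pos_of_connected hconn hn
  have hT := DegreeL2.isSymmetric_normAdjEnd hdeg
  have hcard := DegreeL2.finrank_eq_card hdeg
  have hfix : DegreeL2.normAdjEnd hdeg (DegreeL2.ofFun hdeg (perronFun G)) =
      (1 : ℝ) • DegreeL2.ofFun hdeg (perronFun G) := by
    rw [DegreeL2.normAdjEnd_ofFun, normAdj_mulVec_perronFun hdeg, one_smul]
  have h := inner_apply_self_le_of_finrank_eigenspace_eq_one hT hcard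
    (DegreeL2.inner_normAdjEnd_self_le hdeg)
    (DegreeL2.finrank_eigenspace_normAdjEnd_one hdeg hconn) hn
    ((DegreeL2.norm_ofFun hdeg _).trans (dNorm_perronFun hdeg)) hfix (DegreeL2.ofFun hdeg f)
  rwa [eigenvalues_eq_of_charpoly_eq hT hcard hanti
    ((DegreeL2.charpoly_normAdjEnd hdeg).trans hchar), DegreeL2.normAdjEnd_ofFun,
    DegreeL2.inner_ofFun, DegreeL2.inner_ofFun, DegreeL2.norm_ofFun_sq, one_mul] at h

theorem one_sub_sq_dInner_perronFun_abs_le {f : V → ℝ} {c : ℝ} (hf : dInner G f f = 1)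
    (hc : dInner G f (normAdj G *ᵥ f) ≤ c) :
    1 - dInner G (perronFun G) |f| ^ 2 ≤ (1 + c) / (1 - μs ⟨1, hn⟩) := by
  have hgap : 0 < 1 - μs ⟨1, hn⟩ := sub_pos.2 (second_eigenvalue_lt_one hconn hn hanti hchar)
  have hlower := neg_dInner_normAdj_mulVec_le_abs (G := G) f
  have hupper := dInner_normAdj_mulVec_self_le_perronFun hconn hn hanti hchar |f|
  rw [dInner_abs_abs, hf] at hupper
  rw [le_div_iff₀ hgap]
  linarith

end SpectralGap

open scoped Matrix in
theorem inner_abs_abs_ge_general {V : Type*} [Fintype V] (G : SimpleGraph V)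
    (hconn : G.Connected) (hn : 1 < Fintype.card V)
    (μs : Fin (Fintype.card V) → ℝ) (hanti : Antitone μs)
    (hchar : (normAdj G).charpoly = ∏ i, (X - C (μs i)))
    (μ ν : ℝ) (f g : V → ℝ)
    (hfμ : dInner G f (normAdj G *ᵥ f) ≤ μ) (hfnorm : dNorm G f = 1)
    (hgν : dInner G g (normAdj G *ᵥ g) ≤ ν) (hgnorm : dNorm G g = 1)
    (hμ : (1 + μ) / (1 - μs ⟨1, hn⟩) ≤ 1)
    (hν : (1 + ν) / (1 - μs ⟨1, hn⟩) ≤ 1) :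
    dInner G |f| |g| ≥
      √(1 - (1 + μ) / (1 - μs ⟨1, hn⟩)) * √(1 - (1 + ν) / (1 - μs ⟨1, hn⟩)) -
        √((1 + μ) / (1 - μs ⟨1, hn⟩)) * √((1 + ν) / (1 - μs ⟨1, hn⟩)) := by
  have := hconn.nonempty
  have hdeg := degree_pos_of_connected hconn hn
  have hff : dInner G f f = 1 := Real.sqrt_eq_one.1 hfnorm
  have hgg : dInner G g g = 1 := Real.sqrt_eq_one.1 hgnorm
  set s := (1 + μ) / (1 - μs ⟨1, hn⟩)
  set t := (1 + ν) / (1 - μs ⟨1, hn⟩)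
  set p := dInner G (perronFun G) |f|
  set q := dInner G (perronFun G) |g|
  have hps : 1 - p ^ 2 ≤ s := one_sub_sq_dInner_perronFun_abs_le hconn hn hanti hchar hff hfμ
  have hqt : 1 - q ^ 2 ≤ t := one_sub_sq_dInner_perronFun_abs_le hconn hn hanti hchar hgg hgν
  have hp₀ : 0 ≤ p := dInner_perronFun_nonneg (abs_nonneg f)
  have hq₀ : 0 ≤ q := dInner_perronFun_nonneg (abs_nonneg g)
  have hp : √(1 - s) ≤ p :=
    le_of_sq_le_sq (by rw [Real.sq_sqrt (sub_nonneg.2 hμ)]; linarith) hp₀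
  have hq : √(1 - t) ≤ q :=
    le_of_sq_le_sq (by rw [Real.sq_sqrt (sub_nonneg.2 hν)]; linarith) hq₀
  calc √(1 - s) * √(1 - t) - √s * √t
      ≤ p * q - √(1 - p ^ 2) * √(1 - q ^ 2) := by gcongr
    _ ≤ dInner G |f| |g| := by
        simpa only [dInner_abs_abs, hff, hgg] using
          dInner_mul_dInner_sub_sqrt_mul_sqrt_le_dInner hdeg (dNorm_perronFun hdeg) |f| |g|

/-- **Lemma 4**: for a finite connected graph with second largest normalized adjacency
eigenvalue `μ₂ = μs 1` (eigenvalues listed with multiplicity in decreasing order as the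
roots of the characteristic polynomial of `D⁻¹A`), if `f, g` are eigenfunctions with
eigenvalues `μ, ν`, `‖f‖₂ = ‖g‖₂ = 1`, `(1+μ)/(1-μ₂) ≤ 1` and `(1+ν)/(1-μ₂) ≤ 1`, then
`⟨|f|,|g|⟩ ≥ √(1-(1+μ)/(1-μ₂))·√(1-(1+ν)/(1-μ₂)) - √((1+μ)/(1-μ₂))·√((1+ν)/(1-μ₂))`. -/
theorem inner_abs_abs_ge {V : Type*} [Fintype V] (G : SimpleGraph V)
    (hconn : G.Connected) (hn : 2 ≤ Fintype.card V)
    (μs : Fin (Fintype.card V) → ℝ) (hanti : Antitone μs)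
    (hchar : (normAdj G).charpoly = ∏ i, (X - C (μs i)))
    (μ ν : ℝ) (f g : V → ℝ)
    (hf : f ≠ 0) (hfe : (normAdj G).mulVec f = μ • f) (hfnorm : dNorm G f = 1)
    (hg : g ≠ 0) (hge : (normAdj G).mulVec g = ν • g) (hgnorm : dNorm G g = 1)
    (hμ : (1 + μ) / (1 - μs ⟨1, by omega⟩) ≤ 1)
    (hν : (1 + ν) / (1 - μs ⟨1, by omega⟩) ≤ 1) :
    dInner G (fun w => |f w|) (fun w => |g w|) ≥
      Real.sqrt (1 - (1 + μ) / (1 - μs ⟨1, by omega⟩)) *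
        Real.sqrt (1 - (1 + ν) / (1 - μs ⟨1, by omega⟩)) -
      Real.sqrt ((1 + μ) / (1 - μs ⟨1, by omega⟩)) *
        Real.sqrt ((1 + ν) / (1 - μs ⟨1, by omega⟩)) :=
  inner_abs_abs_ge_general G hconn hn μs hanti hchar μ ν f g
    (dInner_normAdj_mulVec_self_eq_of_mulVec_eq_smul hfnorm hfe).le hfnorm
    (dInner_normAdj_mulVec_self_eq_of_mulVec_eq_smul hgnorm hge).le hgnorm hμ hν

end
end
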